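/- arXiv:2411.08653 — 7 statements merged into one kernel-verified Lean document; each statement's English description precedes it below -/
import Mathlib

section
/- Let γ_i : X_i × X_i → ℝ (1 ≤ i ≤ n) be CND kernels. Then the Kronecker product kernel (x_{1⃗},x_{2⃗}) ↦ ∏_{i=1}^n γ_i(x_i^1, x_i^2) is a PDI_n kernel on 𝕏_n; that is, ∫∫ (−1)^n ∏_{i=1}^n γ_i(x_i^1,x_i^2) dμ(x_{1⃗}) dμ(x_{2⃗}) ≥ 0 for every discrete measure μ ∈ ℳ_n(𝕏_n). -/
noncomputable section

open Finset

namespace PDIPaper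

variable {ι : Type*} [Fintype ι] [DecidableEq ι] {X : ι → Type*}

/-- The grid point `x_α` determined by grid data `x` and a multi-index `α`. -/
def gridPt {m : ℕ} (x : ∀ i, Fin m → X i) (α : ι → Fin m) : ∀ i, X i :=
  fun i => x i (α i)

/-- The point whose coordinates in `F` come from `a` and whose coordinates outside
`F` come from `b` (the point `a_F + b_{F^c}`). -/
def comb (F : Finset ι) (a b : ∀ i, X i) : ∀ i, X i :=
  fun i => if i ∈ F then a i else b i

/-- Glue an `F`-indexed point and an `Fᶜ`-indexed point into a full point. -/
def glue (F : Finset ι) (a : ∀ i : {i // i ∈ F}, X i.1)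
    (b : ∀ i : {i // i ∈ Fᶜ}, X i.1) : ∀ i, X i :=
  fun i => if h : i ∈ F then a ⟨i, h⟩ else b ⟨i, Finset.mem_compl.mpr h⟩

/-- The coefficients `c` of a discrete measure (supported on a grid with `m` points
in each coordinate) belong to `ℳ_k`: for every coordinate subset `F` of cardinality
`n - k + 1` and every fixed multi-index `β` off `F`, the sum of the coefficients over
the `F`-indices vanishes. -/
def MemM (k : ℕ) {m : ℕ} (c : (ι → Fin m) → ℝ) : Prop :=
  ∀ F : Finset ι, F.card = Fintype.card ι - k + 1 →
    ∀ β : ι → Fin m,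
      (∑ σ : {i // i ∈ F} → Fin m,
        c fun i => if h : i ∈ F then σ ⟨i, h⟩ else β i) = 0

/-- The double integral `∬ I dμ dμ` of a kernel against a discrete measure with
grid `x` and coefficients `c`. -/
def dSum {m : ℕ} (I : (∀ i, X i) → (∀ i, X i) → ℝ)
    (x : ∀ i, Fin m → X i) (c : (ι → Fin m) → ℝ) : ℝ :=
  ∑ α : ι → Fin m, ∑ β : ι → Fin m, c α * c β * I (gridPt x α) (gridPt x β)

/-- `sel x1 x2 α` is the point `x_α` for `α ∈ {1,2}^n`, encoded by `Bool`
(`false ↦ 1`, `true ↦ 2`). -/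
def sel (x1 x2 : ∀ i, X i) (α : ι → Bool) : ∀ i, X i :=
  fun i => if α i then x2 i else x1 i

/-- `n`-symmetry of a kernel: `I (x_α) (x_{3⃗-α}) = I x1 x2` for all `α ∈ {1,2}^n`. -/
def NSymm (I : (∀ i, X i) → (∀ i, X i) → ℝ) : Prop :=
  ∀ (x1 x2 : ∀ i, X i) (α : ι → Bool),
    I (sel x1 x2 α) (sel x1 x2 fun i => !(α i)) = I x1 x2

/-- Complete `n`-symmetry of a kernel. -/
def CompleteNSymm (I : (∀ i, X i) → (∀ i, X i) → ℝ) : Prop :=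
  NSymm I ∧ ∀ (F : Finset ι) (x1 x2 x3 x4 : ∀ i, X i),
    I (comb F x1 x3) (comb F x2 x3) = I (comb F x1 x4) (comb F x2 x4)

/-- Positive definite independent kernel of order `k`: an `n`-symmetric kernel with
`∬ (-1)^k I dμ dμ ≥ 0` for every discrete measure `μ ∈ ℳ_k`. -/
def IsPDI (k : ℕ) (I : (∀ i, X i) → (∀ i, X i) → ℝ) : Prop :=
  NSymm I ∧
    ∀ (m : ℕ) (x : ∀ i, Fin m → X i), (∀ i, Function.Injective (x i)) →
      ∀ c : (ι → Fin m) → ℝ, MemM k c →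
        0 ≤ (-1 : ℝ) ^ k * dSum I x c

/-- Strictly positive definite independent kernel of order `k`. -/
def IsSPDI (k : ℕ) (I : (∀ i, X i) → (∀ i, X i) → ℝ) : Prop :=
  NSymm I ∧
    ∀ (m : ℕ) (x : ∀ i, Fin m → X i), (∀ i, Function.Injective (x i)) →
      ∀ c : (ι → Fin m) → ℝ, MemM k c → (∃ α, c α ≠ 0) →
        0 < (-1 : ℝ) ^ k * dSum I x c

/-- The kernel vanishes on the extended diagonal `Δ_{k-1}^n`, i.e. on pairs of points
agreeing in at least `n - k + 1` coordinates. -/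
def ZeroAtDiag (k : ℕ) (I : (∀ i, X i) → (∀ i, X i) → ℝ) : Prop :=
  ∀ x1 x2 : ∀ i, X i,
    (∃ s : Finset ι, s.card = Fintype.card ι - k + 1 ∧ ∀ i ∈ s, x1 i = x2 i) →
    I x1 x2 = 0

/-- Conditionally negative definite (CND) symmetric kernel. -/
def IsCND {Z : Type*} (γ : Z → Z → ℝ) : Prop :=
  (∀ a b, γ a b = γ b a) ∧
    ∀ (m : ℕ) (z : Fin m → Z) (c : Fin m → ℝ), (∑ i, c i) = 0 →
      (∑ i, ∑ j, c i * c j * γ (z i) (z j)) ≤ 0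

/-- Positive definite kernel (quadratic-form condition). -/
def IsPD {Z : Type*} (K : Z → Z → ℝ) : Prop :=
  ∀ (m : ℕ) (z : Fin m → Z) (c : Fin m → ℝ),
    0 ≤ ∑ i, ∑ j, c i * c j * K (z i) (z j)

/-- Integral of `f` against the discrete measure
`μ_k^n[x1, x2] = δ_{x1} + ∑_{j=0}^{k-1} (-1)^{k-j} C(n-j-1, n-k) ∑_{|F|=j} δ_{x1_F + x2_{F^c}}`. -/
def muInt (k : ℕ) (x1 x2 : ∀ i, X i) (f : (∀ i, X i) → ℝ) : ℝ :=
  f x1 + ∑ j ∈ Finset.range k,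
    (-1 : ℝ) ^ (k - j) *
      ((Nat.choose (Fintype.card ι - j - 1) (Fintype.card ι - k) : ℕ) : ℝ) *
      ∑ F ∈ Finset.powersetCard j (Finset.univ : Finset ι), f (comb F x1 x2)

lemma aux_split {n m : ℕ} (i : Fin n) (c h : (Fin n → Fin m) → ℝ)
    (hc : ∀ β, ∑ a, c (Function.update β i a) = 0)
    (hh : ∀ β a, h (Function.update β i a) = h β) : ∑ β, c β * h β = 0 := by
  rw [← (Equiv.funSplitAt i (Fin m)).symm.sum_comp, Fintype.sum_prod_type, Finset.sum_comm]
  refine Finset.sum_eq_zero fun g _ => ?_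
  rcases Nat.eq_zero_or_pos m with rfl | hm
  · simp
  have key : ∀ a, (Equiv.funSplitAt i (Fin m)).symm (a, g) = 
      Function.update ((Equiv.funSplitAt i (Fin m)).symm (⟨0, hm⟩, g)) i a := by
    intro a
    ext j
    by_cases hj : j = i
    · subst hj; simp
    · simp [hj]
  have : ∀ a, c ((Equiv.funSplitAt i (Fin m)).symm (a, g)) * h ((Equiv.funSplitAt i (Fin m)).symm (a, g))
     = c (Function.update ((Equiv.funSplitAt i (Fin m)).symm (⟨0, hm⟩, g)) i a) * 
       h ((Equiv.funSplitAt i (Fin m)).symm (⟨0, hm⟩, g)) := by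
    intro a; rw [key a, hh]
  simp_rw [this]
  rw [← Finset.sum_mul, hc, zero_mul]

lemma aux_mem {n m : ℕ} (c : (Fin n → Fin m) → ℝ) (hc : MemM n c) (i : Fin n) (β : Fin n → Fin m) :
    ∑ a, c (Function.update β i a) = 0 := by
  have := hc {i} (by simp) β
  rw [← this]
  have : Unique {j // j ∈ ({i} : Finset (Fin n))} :=
    ⟨⟨⟨i, by simp⟩⟩, by rintro ⟨j, hj⟩; simpa using hj⟩
  rw [← (Equiv.funUnique {j // j ∈ ({i} : Finset (Fin n))} (Fin m)).symm.sum_comp]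
  refine Finset.sum_congr rfl fun a _ => ?_
  congr 1
  ext j
  by_cases hj : j = i
  · subst hj; simp
  · simp [hj]

lemma aux_pd {n m : ℕ} (c : (Fin n → Fin m) → ℝ) (K : Fin n → Matrix (Fin m) (Fin m) ℝ)
    (hK : ∀ i, (K i).PosSemidef) :
    0 ≤ ∑ α, ∑ β, c α * c β * ∏ i, K i (α i) (β i) := by
  have h1 := fun i => Matrix.posSemidef_iff_eq_sum_vecMulVec.1 (hK i)
  choose M B hB using h1
  have h2 : ∀ α β : Fin n → Fin m, ∏ i, K i (α i) (β i) =
      ∑ S : (∀ i, Fin (M i)), (∏ i, B i (S i) (α i)) * ∏ i, B i (S i) (β i) := by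
    intro α β
    have : ∀ i, K i (α i) (β i) = ∑ s, B i s (α i) * B i s (β i) := by
      intro i
      rw [hB i, Matrix.sum_apply]
      simp [Matrix.vecMulVec_apply]
    simp_rw [this, Finset.prod_univ_sum, Fintype.piFinset_univ, Finset.prod_mul_distrib]
  have h3 : ∑ α, ∑ β, c α * c β * ∏ i, K i (α i) (β i) =
      ∑ S : (∀ i, Fin (M i)), (∑ α, c α * ∏ i, B i (S i) (α i)) ^ 2 := by
    simp_rw [h2, sq, Finset.sum_mul_sum, Finset.mul_sum]
    symm
    rw [Finset.sum_comm]
    refine Finset.sum_congr rfl fun a _ => ?_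
    rw [Finset.sum_comm]
    refine Finset.sum_congr rfl fun b _ => Finset.sum_congr rfl fun s _ => ?_
    ring
  rw [h3]
  positivity

lemma aux_psd {m : ℕ} (hm : 0 < m) {Z : Type*} (γ : Z → Z → ℝ) (hγ : IsCND γ) (z : Fin m → Z) :
    (Matrix.of fun a b : Fin m => γ (z a) (z ⟨0, hm⟩) + γ (z ⟨0, hm⟩) (z b) - γ (z a) (z b)
      - γ (z ⟨0, hm⟩) (z ⟨0, hm⟩)).PosSemidef := by
  set o : Fin m := ⟨0, hm⟩
  refine Matrix.PosSemidef.of_dotProduct_mulVec_nonneg ?_ ?_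
  · ext a b
    simp [hγ.1 (z b) (z a), hγ.1 (z b) (z o), hγ.1 (z o) (z a)]
    ring
  · intro d
    have h := hγ.2 m z (fun a => d a - (∑ j, d j) * (if a = o then 1 else 0)) (by simp)
    have e : ∀ i j, (d i - (∑ j, d j) * (if i = o then 1 else 0)) *
      (d j - (∑ j, d j) * (if j = o then 1 else 0)) * γ (z i) (z j) =
      d i * d j * γ (z i) (z j) - (if j = o then d i * (∑ j, d j) * γ (z i) (z o) else 0)
       - (if i = o then (∑ j, d j) * (d j * γ (z o) (z j)) else 0)
       + (if i = o then (if j = o then (∑ j, d j) * (∑ j, d j) * γ (z o) (z o) else 0) else 0) := by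
      intro i j
      by_cases hi : i = o <;> by_cases hj : j = o <;> simp [hi, hj] <;> ring
    simp_rw [e] at h
    have e2 : star d ⬝ᵥ (Matrix.of fun a b : Fin m => γ (z a) (z o) + γ (z o) (z b) - γ (z a) (z b)
      - γ (z o) (z o)).mulVec d = (∑ i, d i * (∑ j, d j) * γ (z i) (z o)) 
        + (∑ j, d j) * (∑ j, d j * γ (z o) (z j)) - (∑ i, ∑ j, d i * d j * γ (z i) (z j))
        - (∑ j, d j) * (∑ j, d j) * γ (z o) (z o) := by
      simp only [dotProduct, Matrix.mulVec, Matrix.of_apply, star_trivial]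
      rw [Finset.sum_mul_sum, Finset.sum_mul_sum, Finset.sum_mul]
      rw [← Finset.sum_add_distrib, ← Finset.sum_sub_distrib, ← Finset.sum_sub_distrib]
      refine Finset.sum_congr rfl fun i _ => ?_
      simp_rw [Finset.mul_sum, Finset.sum_mul]
      rw [← Finset.sum_add_distrib, ← Finset.sum_sub_distrib, ← Finset.sum_sub_distrib]
      refine Finset.sum_congr rfl fun j _ => ?_
      ring
    rw [e2]
    simp only [Finset.sum_add_distrib, Finset.sum_sub_distrib, Finset.sum_ite_eq', Finset.mem_univ,
      if_true, Finset.sum_comm (f := fun i j => if i = o then _ else _), ← Finset.mul_sum] at h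
    linarith

lemma aux_step {n m : ℕ} (c : (Fin n → Fin m) → ℝ) (hc : MemM n c)
    (G K : Fin n → Fin m → Fin m → ℝ) (f g : Fin n → Fin m → ℝ)
    (hK : ∀ i a b, K i a b = G i a b + f i a + g i b) (s : Finset (Fin n)) :
    ∑ α, ∑ β, c α * c β * ∏ i, (if i ∈ s then K i (α i) (β i) else G i (α i) (β i)) =
    ∑ α, ∑ β, c α * c β * ∏ i, G i (α i) (β i) := by
  induction s using Finset.induction_on with
  | empty => simp
  | insert i s hi ih =>
    rw [← ih]
    set R : (Fin n → Fin m) → (Fin n → Fin m) → ℝ := fun α β =>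
      ∏ j ∈ Finset.univ.erase i, (if j ∈ s then K j (α j) (β j) else G j (α j) (β j)) with hR
    have hR1 : ∀ α β a, R (Function.update α i a) β = R α β := by
      intro α β a
      refine Finset.prod_congr rfl fun j hj => ?_
      rw [Function.update_of_ne (Finset.ne_of_mem_erase hj)]
    have hR2 : ∀ α β a, R α (Function.update β i a) = R α β := by
      intro α β a
      refine Finset.prod_congr rfl fun j hj => ?_
      rw [Function.update_of_ne (Finset.ne_of_mem_erase hj)]
    have e1 : ∀ α β : Fin n → Fin m, ∏ j, (if j ∈ insert i s then K j (α j) (β j) else G j (α j) (β j)) =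
        ∏ j, (if j ∈ s then K j (α j) (β j) else G j (α j) (β j)) + f i (α i) * R α β + g i (β i) * R α β := by
      intro α β
      rw [← Finset.mul_prod_erase _ _ (Finset.mem_univ i), 
        ← Finset.mul_prod_erase (a := i) (s := Finset.univ) (f := fun j => (if j ∈ s then K j (α j) (β j) else G j (α j) (β j))) (Finset.mem_univ i)]
      have : ∏ j ∈ Finset.univ.erase i, (if j ∈ insert i s then K j (α j) (β j) else G j (α j) (β j)) = R α β := by
        refine Finset.prod_congr rfl fun j hj => ?_
        simp [Finset.ne_of_mem_erase hj]
      rw [this]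
      rw [if_pos (Finset.mem_insert_self i s), if_neg hi, hK i]
      change _ = _ * R α β + _ + _
      ring
    simp_rw [e1, mul_add, Finset.sum_add_distrib]
    have z1 : ∑ α, ∑ β, c α * c β * (f i (α i) * R α β) = 0 := by
      refine Finset.sum_eq_zero fun α _ => ?_
      rw [← aux_split i c (fun β => c α * f i (α i) * R α β) (aux_mem c hc i) 
        (fun β a => by simp [hR2])]
      exact Finset.sum_congr rfl fun β _ => by ring
    have z2 : ∑ α, ∑ β, c α * c β * (g i (β i) * R α β) = 0 := by
      rw [Finset.sum_comm]
      refine Finset.sum_eq_zero fun β _ => ?_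
      rw [← aux_split i c (fun α => c β * g i (β i) * R α β) (aux_mem c hc i) 
        (fun β a => by simp [hR1])]
      exact Finset.sum_congr rfl fun β _ => by ring
    rw [z1, z2]; ring

/-- The Kronecker product of `n` CND kernels is a PDI_n kernel. -/
theorem statement0 {n : ℕ} (X : Fin n → Type*)
    (γ : ∀ i, X i → X i → ℝ) (hγ : ∀ i, IsCND (γ i)) :
    IsPDI n (fun x1 x2 : ∀ i, X i => ∏ i, γ i (x1 i) (x2 i)) := by
  refine ⟨?_, ?_⟩
  · intro x1 x2 α
    refine Finset.prod_congr rfl fun i _ => ?_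
    by_cases h : α i
    · simp [sel, h, (hγ i).1 (x2 i) (x1 i)]
    · simp [sel, h]
  · intro m x _ c hc
    have e0 : (-1 : ℝ) ^ n * dSum (fun x1 x2 : ∀ i, X i => ∏ i, γ i (x1 i) (x2 i)) x c =
        ∑ α, ∑ β, c α * c β * ∏ i, (- γ i (x i (α i)) (x i (β i))) := by
      simp only [dSum, gridPt, Finset.mul_sum, Finset.prod_neg, Finset.card_univ, Fintype.card_fin]
      refine Finset.sum_congr rfl fun α _ => Finset.sum_congr rfl fun β _ => ?_
      ring
    rw [e0]
    rcases Nat.eq_zero_or_pos m with rfl | hm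
    · rcases n with _ | n
      · simp [← Finset.mul_sum, ← Finset.sum_mul, mul_self_nonneg]
      · simp
    · have h1 := aux_pd c _ (fun i => aux_psd hm (γ i) (hγ i) (x i))
      have h2 := aux_step c hc (fun i a b => - γ i (x i a) (x i b))
        (fun i a b => γ i (x i a) (x i ⟨0, hm⟩) + γ i (x i ⟨0, hm⟩) (x i b) - γ i (x i a) (x i b)
      - γ i (x i ⟨0, hm⟩) (x i ⟨0, hm⟩)) (fun i a => γ i (x i a) (x i ⟨0, hm⟩))
        (fun i b => γ i (x i ⟨0, hm⟩) (x i b) - γ i (x i ⟨0, hm⟩) (x i ⟨0, hm⟩))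
        (fun i a b => by ring) Finset.univ
      rw [← h2]
      simpa using h1

end PDIPaper
end
end

section
/- Let 𝕴 : 𝕏_n × 𝕏_n → ℝ be an n-symmetric kernel and define 𝕴'(x_{1⃗},x_{2⃗}) := 2^{−n} ∑_{α,β∈{1,2}^n} (−1)^{n−|α|−|β|} 𝕴(x_α, x_β), where |α| = α_1+…+α_n. Then: (a) 𝕴' is n-symmetric; (b) for every discrete measure μ ∈ ℳ_n(𝕏_n), ∫∫ (−1)^n 𝕴' dμ dμ = ∫∫ (−1)^n 𝕴 dμ dμ, hence 𝕴' is PDI_n if and only if 𝕴 is PDI_n; (c) 𝕴'(x_{1⃗},x_{2⃗}) = 0 whenever x_i^1 = x_i^2 for at least one index i; (d) if 𝕴(x_{1⃗},x_{2⃗}) = 0 whenever x_i^1 = x_i^2 for at least one index i, then 𝕴' = 𝕴. -/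
noncomputable section

open Finset

namespace PDIPaper

variable {ι : Type*} [Fintype ι] [DecidableEq ι] {X : ι → Type*}

/-- The kernel `𝕴'` of Lemma `PDInsimpli`:
`𝕴'(x1,x2) = 2^{-n} ∑_{α,β ∈ {1,2}^n} (-1)^{n-|α|-|β|} 𝕴(x_α, x_β)`. -/
def stmt1Kernel {n : ℕ} {X : Fin n → Type*}
    (I : (∀ i, X i) → (∀ i, X i) → ℝ) : (∀ i, X i) → (∀ i, X i) → ℝ :=
  fun x1 x2 =>
    ((2 : ℝ) ^ n)⁻¹ *
      ∑ α : Fin n → Bool, ∑ β : Fin n → Bool,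
        (-1 : ℝ) ^ ((n : ℤ) - ((∑ i, if α i then 2 else 1 : ℕ) : ℤ)
            - ((∑ i, if β i then 2 else 1 : ℕ) : ℤ)) *
          I (sel x1 x2 α) (sel x1 x2 β)

theorem aux_sign {n : ℕ} (α β : Fin n → Bool) :
    (-1 : ℝ) ^ ((n : ℤ) - ((∑ i, if α i then 2 else 1 : ℕ) : ℤ)
            - ((∑ i, if β i then 2 else 1 : ℕ) : ℤ)) =
      ∏ i, (if α i = β i then (-1 : ℝ) else 1) := by
  have h1 : ∀ (s : Finset (Fin n)) (f : Fin n → ℤ),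
      (-1 : ℝ) ^ (∑ i ∈ s, f i) = ∏ i ∈ s, (-1 : ℝ) ^ (f i) := by
    intro s f
    induction s using Finset.induction_on with
    | empty => simp
    | insert a s ha ih =>
      rw [Finset.sum_insert ha, Finset.prod_insert ha, zpow_add₀ (by norm_num), ih]
  have h2 : ((n : ℤ) - ((∑ i, if α i then 2 else 1 : ℕ) : ℤ)
            - ((∑ i, if β i then 2 else 1 : ℕ) : ℤ)) =
      ∑ i, ((1 : ℤ) - (if α i then 2 else 1) - (if β i then 2 else 1)) := by
    push_cast
    rw [Finset.sum_sub_distrib, Finset.sum_sub_distrib]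
    simp
  rw [h2, h1]
  refine Finset.prod_congr rfl fun i _ => ?_
  cases α i <;> cases β i <;> norm_num

theorem aux_kernel {n : ℕ} {X : Fin n → Type*}
    (I : (∀ i, X i) → (∀ i, X i) → ℝ) (x1 x2 : ∀ i, X i) :
    stmt1Kernel I x1 x2 = ((2 : ℝ) ^ n)⁻¹ *
      ∑ α : Fin n → Bool, ∑ β : Fin n → Bool,
        (∏ i, (if α i = β i then (-1 : ℝ) else 1)) * I (sel x1 x2 α) (sel x1 x2 β) := by
  simp only [stmt1Kernel, aux_sign]

theorem aux_collapse {n : ℕ} (T : (Fin n → Bool) → (Fin n → Bool) → ℝ) (D : ℝ)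
    (h0 : ∀ α β i, α i = β i → T α β = 0) (h1 : ∀ α, T α (fun i => !(α i)) = D) :
    ((2 : ℝ) ^ n)⁻¹ * ∑ α : Fin n → Bool, ∑ β : Fin n → Bool,
        (∏ i, (if α i = β i then (-1 : ℝ) else 1)) * T α β = D := by
  have h : ∀ α : Fin n → Bool, ∑ β : Fin n → Bool,
        (∏ i, (if α i = β i then (-1 : ℝ) else 1)) * T α β = D := by
    intro α
    rw [Finset.sum_eq_single (fun i => !(α i))]
    · rw [h1]; simp
    · intro β _ hβ
      obtain ⟨i, hi⟩ := Function.ne_iff.mp hβ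
      rw [h0 α β i (by revert hi; cases α i <;> cases β i <;> simp), mul_zero]
    · simp
  simp [h]

theorem aux_marg {n m : ℕ} (c g : (Fin n → Fin m) → ℝ) (hc : MemM n c) (i : Fin n)
    (hg : ∀ b b', (∀ j, j ≠ i → b j = b' j) → g b = g b') :
    ∑ b, c b * g b = 0 := by
  rw [← (Equiv.funSplitAt i (Fin m)).symm.sum_comp, Fintype.sum_prod_type_right]
  refine Finset.sum_eq_zero fun r _ => ?_
  rcases Nat.eq_zero_or_pos m with rfl | hm
  · simp
  let v0 : Fin m := ⟨0, hm⟩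
  have h1 : ∀ v, g ((Equiv.funSplitAt i (Fin m)).symm (v, r)) =
      g ((Equiv.funSplitAt i (Fin m)).symm (v0, r)) := by
    intro v
    apply hg
    intro j hj
    simp [Equiv.funSplitAt, Equiv.piSplitAt, hj]
  simp only [h1]
  rw [← Finset.sum_mul]
  have h2 := hc {i} (by simp) ((Equiv.funSplitAt i (Fin m)).symm (v0, r))
  have : ∑ v, c ((Equiv.funSplitAt i (Fin m)).symm (v, r)) = 0 := by
    rw [← h2]
    let e : Fin m ≃ ({j // j ∈ ({i} : Finset (Fin n))} → Fin m) :=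
      { toFun := fun v _ => v
        invFun := fun f => f ⟨i, by simp⟩
        left_inv := fun v => rfl
        right_inv := fun f => by
          funext ⟨j, hj⟩
          have : j = i := by simpa using hj
          subst this
          rfl }
    rw [← e.sum_comp]
    refine Finset.sum_congr rfl fun v _ => ?_
    congr 1
    funext j
    by_cases hj : j = i
    · subst hj
      simp [Equiv.funSplitAt, Equiv.piSplitAt, e]
    · simp [Equiv.funSplitAt, Equiv.piSplitAt, hj]
  rw [this, zero_mul]

theorem aux_dSum {n : ℕ} {X : Fin n → Type*}
    (I : (∀ i, X i) → (∀ i, X i) → ℝ) (hsym : NSymm I) {m : ℕ} (x : ∀ i, Fin m → X i)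
    (c : (Fin n → Fin m) → ℝ) (hc : MemM n c) :
    dSum (stmt1Kernel I) x c = dSum I x c := by
  rw [← aux_collapse (fun α β => ∑ a : Fin n → Fin m, ∑ b : Fin n → Fin m, c a * c b *
    I (sel (gridPt x a) (gridPt x b) α) (sel (gridPt x a) (gridPt x b) β)) (dSum I x c)]
  · simp only [dSum, aux_kernel, Finset.mul_sum]
    calc _ = ∑ a : Fin n → Fin m, ∑ α : Fin n → Bool, ∑ b : Fin n → Fin m,
          ∑ β : Fin n → Bool, c a * c b * (((2 : ℝ) ^ n)⁻¹ *
          ((∏ i, (if α i = β i then (-1 : ℝ) else 1)) *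
          I (sel (gridPt x a) (gridPt x b) α) (sel (gridPt x a) (gridPt x b) β))) :=
          Finset.sum_congr rfl fun a _ => Finset.sum_comm
      _ = ∑ α : Fin n → Bool, ∑ a : Fin n → Fin m, ∑ β : Fin n → Bool,
          ∑ b : Fin n → Fin m, c a * c b * (((2 : ℝ) ^ n)⁻¹ *
          ((∏ i, (if α i = β i then (-1 : ℝ) else 1)) *
          I (sel (gridPt x a) (gridPt x b) α) (sel (gridPt x a) (gridPt x b) β))) := by
          rw [Finset.sum_comm]
          exact Finset.sum_congr rfl fun a _ => Finset.sum_congr rfl fun _ _ => Finset.sum_comm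
      _ = _ := by
          refine Finset.sum_congr rfl fun α _ => ?_
          rw [Finset.sum_comm]
          refine Finset.sum_congr rfl fun β _ => Finset.sum_congr rfl fun a _ =>
            Finset.sum_congr rfl fun b _ => ?_
          ring
  · intro α β i hi
    cases hα : α i with
    | false =>
      have hβ : β i = false := by rw [← hi, hα]
      refine Finset.sum_eq_zero fun a _ => ?_
      simp only [mul_assoc]
      rw [← Finset.mul_sum, aux_marg c _ hc i, mul_zero]
      intro b b' hb
      congr 1 <;>
      · funext j
        by_cases hj : j = i
        · subst hj; simp [sel, hα, hβ]
        · simp [sel, gridPt, hb j hj]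
    | true =>
      have hβ : β i = true := by rw [← hi, hα]
      rw [Finset.sum_comm]
      refine Finset.sum_eq_zero fun b _ => ?_
      simp only [mul_comm (c _) (c b)]
      simp only [mul_assoc]
      rw [← Finset.mul_sum, aux_marg c _ hc i, mul_zero]
      intro a a' ha
      congr 1 <;>
      · funext j
        by_cases hj : j = i
        · subst hj; simp [sel, hα, hβ]
        · simp [sel, gridPt, ha j hj]
  · intro α
    simp only [dSum, hsym _ _ α]

theorem aux_symm {n : ℕ} {X : Fin n → Type*}
    (I : (∀ i, X i) → (∀ i, X i) → ℝ) : NSymm (stmt1Kernel I) := by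
  intro x1 x2 γ
  rw [aux_kernel, aux_kernel]
  congr 1
  let e : (Fin n → Bool) ≃ (Fin n → Bool) :=
    { toFun := fun α i => xor (γ i) (α i)
      invFun := fun α i => xor (γ i) (α i)
      left_inv := fun α => by funext i; simp
      right_inv := fun α => by funext i; simp }
  have hs : ∀ α, sel (sel x1 x2 γ) (sel x1 x2 fun i => !(γ i)) α = sel x1 x2 (e α) := by
    intro α
    funext i
    change _ = if xor (γ i) (α i) then x2 i else x1 i
    simp only [sel]
    rcases Bool.eq_false_or_eq_true (γ i) with h1 | h1 <;>
      rcases Bool.eq_false_or_eq_true (α i) with h2 | h2 <;> simp [h1, h2]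
  conv_rhs => rw [← e.sum_comp]
  refine Finset.sum_congr rfl fun α _ => ?_
  conv_rhs => rw [← e.sum_comp]
  refine Finset.sum_congr rfl fun β _ => ?_
  rw [hs, hs]
  congr 1
  refine Finset.prod_congr rfl fun i _ => ?_
  change _ = if xor (γ i) (α i) = xor (γ i) (β i) then (-1 : ℝ) else 1
  cases γ i <;> cases α i <;> cases β i <;> simp

theorem aux_zero {n : ℕ} {X : Fin n → Type*}
    (I : (∀ i, X i) → (∀ i, X i) → ℝ) (x1 x2 : ∀ i, X i) (i : Fin n) (h : x1 i = x2 i) :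
    stmt1Kernel I x1 x2 = 0 := by
  rw [aux_kernel]
  let e : (Fin n → Bool) ≃ (Fin n → Bool) :=
    { toFun := fun α => Function.update α i (!(α i))
      invFun := fun α => Function.update α i (!(α i))
      left_inv := fun α => by simp
      right_inv := fun α => by simp }
  have hs : ∀ α, sel x1 x2 (e α) = sel x1 x2 α := by
    intro α
    funext j
    change (if Function.update α i (!(α i)) j then x2 j else x1 j) = _
    by_cases hj : j = i
    · subst hj; simp [sel, h]
    · simp [sel, hj]
  have hp : ∀ α β : Fin n → Bool, (∏ j, (if e α j = β j then (-1 : ℝ) else 1)) =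
      - ∏ j, (if α j = β j then (-1 : ℝ) else 1) := by
    intro α β
    rw [Fintype.prod_eq_mul_prod_compl i, Fintype.prod_eq_mul_prod_compl i, ← neg_mul]
    congr 1
    · change (if Function.update α i (!(α i)) i = β i then (-1 : ℝ) else 1) = _
      rw [Function.update_self]
      cases α i <;> cases β i <;> simp
    · refine Finset.prod_congr rfl fun j hj => ?_
      have hj : j ≠ i := by simpa using hj
      change (if Function.update α i (!(α i)) j = β j then (-1 : ℝ) else 1) = _
      rw [Function.update_of_ne hj]
  have key : ∑ α : Fin n → Bool, ∑ β : Fin n → Bool,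
        (∏ i, (if α i = β i then (-1 : ℝ) else 1)) * I (sel x1 x2 α) (sel x1 x2 β) =
      - ∑ α : Fin n → Bool, ∑ β : Fin n → Bool,
        (∏ i, (if α i = β i then (-1 : ℝ) else 1)) * I (sel x1 x2 α) (sel x1 x2 β) := by
    conv_lhs => rw [← e.sum_comp]
    simp only [hs, hp, neg_mul, Finset.sum_neg_distrib]
  have : ∑ α : Fin n → Bool, ∑ β : Fin n → Bool,
        (∏ i, (if α i = β i then (-1 : ℝ) else 1)) * I (sel x1 x2 α) (sel x1 x2 β) = 0 := by
    linarith
  rw [this, mul_zero]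

theorem statement1 {n : ℕ} (X : Fin n → Type*)
    (I : (∀ i, X i) → (∀ i, X i) → ℝ) (hsym : NSymm I) :
    NSymm (stmt1Kernel I) ∧
      (∀ (m : ℕ) (x : ∀ i, Fin m → X i), (∀ i, Function.Injective (x i)) →
        ∀ c : (Fin n → Fin m) → ℝ, MemM n c →
          (-1 : ℝ) ^ n * dSum (stmt1Kernel I) x c = (-1 : ℝ) ^ n * dSum I x c) ∧
      (IsPDI n (stmt1Kernel I) ↔ IsPDI n I) ∧
      (∀ x1 x2 : ∀ i, X i, (∃ i, x1 i = x2 i) → stmt1Kernel I x1 x2 = 0) ∧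
      ((∀ x1 x2 : ∀ i, X i, (∃ i, x1 i = x2 i) → I x1 x2 = 0) → stmt1Kernel I = I) := by
  refine ⟨aux_symm I, ?_, ?_, ?_, ?_⟩
  · intro m x _ c hc
    rw [aux_dSum I hsym x c hc]
  · constructor
    · rintro ⟨_, h⟩
      refine ⟨hsym, fun m x hx c hc => ?_⟩
      rw [← aux_dSum I hsym x c hc]
      exact h m x hx c hc
    · rintro ⟨_, h⟩
      refine ⟨aux_symm I, fun m x hx c hc => ?_⟩
      rw [aux_dSum I hsym x c hc]
      exact h m x hx c hc
  · rintro x1 x2 ⟨i, hi⟩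
    exact aux_zero I x1 x2 i hi
  · intro h0
    funext x1 x2
    rw [aux_kernel]
    refine aux_collapse (fun α β => I (sel x1 x2 α) (sel x1 x2 β)) _ ?_ ?_
    · intro α β i hi
      exact h0 _ _ ⟨i, by simp [sel, hi]⟩
    · intro α
      exact hsym x1 x2 α

end PDIPaper
end
end

section
/- Let 𝕴 : 𝕏_n × 𝕏_n → ℝ be an n-symmetric kernel that is zero at the extended diagonal Δ_{n−1}^n, fix x_{0⃗} ∈ 𝕏_n, and let K^𝕴(x_{1⃗},x_{2⃗}) := (−1)^n ∑_{F,G ⊆ {1,…,n}} (−1)^{|F|+|G|} 𝕴(x_{1⃗_F+0⃗_{F^c}}, x_{2⃗_G+0⃗_{G^c}}). Then for all x_{1⃗}, x_{2⃗} ∈ 𝕏_n: ∑_{α,β ∈ {1,2}^n} (−1)^{|α|+|β|} K^𝕴(x_α, x_β) = 2^n 𝕴(x_{1⃗}, x_{2⃗}), where |α| = α_1+…+α_n. -/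
noncomputable section

open Finset

namespace PDIPaper

variable {ι : Type*} [Fintype ι] [DecidableEq ι] {X : ι → Type*}

/-- The kernel `K^𝕴` of Lemma `PDIntoPDn`. -/
def stmt4K {n : ℕ} {X : Fin n → Type*} (I : (∀ i, X i) → (∀ i, X i) → ℝ)
    (x0 : ∀ i, X i) : (∀ i, X i) → (∀ i, X i) → ℝ :=
  fun x1 x2 =>
    (-1 : ℝ) ^ n *
      ∑ F : Finset (Fin n), ∑ G : Finset (Fin n),
        (-1 : ℝ) ^ (F.card + G.card) * I (comb F x1 x0) (comb G x2 x0)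

/-- sign of a multi-index -/
def sg {n : ℕ} (α : Fin n → Bool) : ℝ := (-1 : ℝ) ^ (∑ i, if α i then 2 else 1 : ℕ)

lemma sg_eq_prod {n : ℕ} (α : Fin n → Bool) : sg α = ∏ i, (if α i then (1 : ℝ) else -1) := by
  unfold sg
  rw [← Finset.prod_pow_eq_pow_sum]
  refine Finset.prod_congr rfl fun i _ => ?_
  cases α i <;> simp

lemma sg_update {n : ℕ} (α : Fin n → Bool) (i : Fin n) :
    sg (Function.update α i (!(α i))) = - sg α := by
  rw [sg_eq_prod, sg_eq_prod, ← Finset.mul_prod_erase _ _ (Finset.mem_univ i),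
    ← Finset.mul_prod_erase _ (fun j => if α j then (1 : ℝ) else -1) (Finset.mem_univ i)]
  have h : ∀ j ∈ Finset.univ.erase i,
      (if (Function.update α i (!(α i))) j then (1 : ℝ) else -1) = if α j then (1 : ℝ) else -1 := by
    intro j hj
    rw [Function.update_of_ne (Finset.ne_of_mem_erase hj)]
  rw [Finset.prod_congr rfl h]
  cases hα : α i <;> simp [hα]

lemma sg_mul_not {n : ℕ} (α : Fin n → Bool) : sg α * sg (fun i => !(α i)) = (-1) ^ n := by
  rw [sg_eq_prod, sg_eq_prod, ← Finset.prod_mul_distrib]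
  have : ∀ i ∈ (Finset.univ : Finset (Fin n)),
      (if α i then (1 : ℝ) else -1) * (if (!(α i)) then (1 : ℝ) else -1) = -1 := by
    intro i _
    cases α i <;> simp
  rw [Finset.prod_congr rfl this]
  simp

lemma sum_comb_zero {n : ℕ} {X : Fin n → Type*} (x0 x1 x2 : ∀ i, X i)
    (f : (∀ i, X i) → ℝ) (F : Finset (Fin n)) (hF : F ≠ Finset.univ) :
    ∑ α : Fin n → Bool, sg α * f (comb F (sel x1 x2 α) x0) = 0 := by
  obtain ⟨i, hi⟩ : ∃ i, i ∉ F := by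
    by_contra h
    push Not at h
    exact hF (Finset.eq_univ_iff_forall.mpr h)
  refine Finset.sum_involution (fun α _ => Function.update α i (!(α i))) ?_ ?_ ?_ ?_
  · intro α _
    have : comb F (sel x1 x2 (Function.update α i (!(α i)))) x0 = comb F (sel x1 x2 α) x0 := by
      funext j
      unfold comb sel
      by_cases hj : j ∈ F
      · have : j ≠ i := fun h => hi (h ▸ hj)
        simp [hj, Function.update_of_ne this]
      · simp [hj]
    rw [this, sg_update]
    ring
  · intro α _ _ h
    have := congrFun h i
    simp at this
  · intro α _
    exact Finset.mem_univ _
  · intro α _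
    simp

lemma sum_comb {n : ℕ} {X : Fin n → Type*} (x0 x1 x2 : ∀ i, X i)
    (f : (∀ i, X i) → ℝ) :
    ∑ α : Fin n → Bool, sg α * ∑ F : Finset (Fin n), (-1 : ℝ) ^ F.card *
      f (comb F (sel x1 x2 α) x0) = (-1) ^ n * ∑ α : Fin n → Bool, sg α * f (sel x1 x2 α) := by
  simp_rw [Finset.mul_sum]
  rw [Finset.sum_comm, Finset.sum_eq_single (Finset.univ : Finset (Fin n))]
  · refine Finset.sum_congr rfl fun α _ => ?_
    have : comb Finset.univ (sel x1 x2 α) x0 = sel x1 x2 α := by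
      funext j
      simp [comb]
    rw [this, Finset.card_univ, Fintype.card_fin]
    ring
  · intro F _ hF
    have := sum_comb_zero x0 x1 x2 f F hF
    calc _ = (-1 : ℝ) ^ F.card * ∑ α : Fin n → Bool, sg α * f (comb F (sel x1 x2 α) x0) := by
          rw [Finset.mul_sum]
          exact Finset.sum_congr rfl fun α _ => by ring
      _ = 0 := by rw [this, mul_zero]
  · intro h
    exact absurd (Finset.mem_univ _) h

theorem statement4 {n : ℕ} (X : Fin n → Type*)
    (I : (∀ i, X i) → (∀ i, X i) → ℝ) (hsym : NSymm I) (hz : ZeroAtDiag n I)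
    (x0 : ∀ i, X i) :
    ∀ x1 x2 : ∀ i, X i,
      (∑ α : Fin n → Bool, ∑ β : Fin n → Bool,
        (-1 : ℝ) ^ ((∑ i, if α i then 2 else 1 : ℕ) + (∑ i, if β i then 2 else 1 : ℕ)) *
          stmt4K I x0 (sel x1 x2 α) (sel x1 x2 β)) = 2 ^ n * I x1 x2 := by
  intro x1 x2
  have e : ((-1 : ℝ) ^ n) * (-1) ^ n = 1 := by
    rw [← mul_pow]; simp
  have h1 : ∀ α : Fin n → Bool, (∑ β : Fin n → Bool,
      (-1 : ℝ) ^ ((∑ i, if α i then 2 else 1 : ℕ) + (∑ i, if β i then 2 else 1 : ℕ)) *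
          stmt4K I x0 (sel x1 x2 α) (sel x1 x2 β)) =
      sg α * ∑ F : Finset (Fin n), (-1 : ℝ) ^ F.card *
        ∑ β : Fin n → Bool, sg β * I (comb F (sel x1 x2 α) x0) (sel x1 x2 β) := by
    intro α
    have h2 : ∀ F : Finset (Fin n), 
        ∑ β : Fin n → Bool, sg β * I (comb F (sel x1 x2 α) x0) (sel x1 x2 β) =
        (-1) ^ n * ∑ β : Fin n → Bool, sg β * ∑ G : Finset (Fin n), (-1 : ℝ) ^ G.card *
          I (comb F (sel x1 x2 α) x0) (comb G (sel x1 x2 β) x0) := by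
      intro F
      rw [sum_comb x0 x1 x2 (I (comb F (sel x1 x2 α) x0)), ← mul_assoc, e, one_mul]
    simp_rw [h2, stmt4K, Finset.mul_sum]
    rw [Finset.sum_comm]
    refine Finset.sum_congr rfl fun F _ => Finset.sum_congr rfl fun β _ =>
      Finset.sum_congr rfl fun G _ => ?_
    rw [pow_add, pow_add]
    unfold sg
    ring
  rw [Finset.sum_congr rfl fun α _ => h1 α,
    sum_comb x0 x1 x2 (fun y => ∑ β : Fin n → Bool, sg β * I y (sel x1 x2 β))]
  have h3 : ∀ α : Fin n → Bool, sg α * ∑ β : Fin n → Bool, sg β * I (sel x1 x2 α) (sel x1 x2 β)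
      = (-1) ^ n * I x1 x2 := by
    intro α
    rw [Finset.sum_eq_single (fun i => !(α i))]
    · rw [hsym, ← mul_assoc, sg_mul_not]
    · intro β _ hβ
      obtain ⟨i, hi⟩ := Function.ne_iff.mp hβ
      have hi' : α i = β i := by
        revert hi
        cases α i <;> cases β i <;> simp
      rw [hz _ _ ⟨{i}, by simp, ?_⟩, mul_zero]
      intro j hj
      rw [Finset.mem_singleton] at hj
      subst hj
      simp [sel, hi']
    · intro h
      exact absurd (Finset.mem_univ _) h
  rw [Finset.sum_congr rfl fun α _ => h3 α, Finset.sum_const, Finset.card_univ]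
  simp only [Fintype.card_pi, Fintype.card_bool, Finset.prod_const, Finset.card_univ,
    Fintype.card_fin, nsmul_eq_mul]
  push_cast
  calc _ = ((-1 : ℝ) ^ n * (-1) ^ n) * (2 ^ n * I x1 x2) := by ring
    _ = _ := by rw [e, one_mul]

end PDIPaper
end
end

section
/- Let n ≥ 2, let 𝕴 : 𝕏_n × 𝕏_n → [0,∞) be a PDI_n kernel that is zero at the extended diagonal Δ_{n−1}^n, and let f : [0,∞) → ℝ. If the kernel (x,y) ↦ f(𝕴(x,y)) is positive definite on 𝕏_n, then it is constant: f(𝕴(x,y)) = f(0) for all x, y ∈ 𝕏_n. -/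
noncomputable section

open Finset

namespace PDIPaper

variable {ι : Type*} [Fintype ι] [DecidableEq ι] {X : ι → Type*}

theorem statement6 {n : ℕ} (hn : 2 ≤ n) (X : Fin n → Type*)
    (I : (∀ i, X i) → (∀ i, X i) → ℝ) (hpos : ∀ x1 x2 : ∀ i, X i, 0 ≤ I x1 x2)
    (hI : IsPDI n I) (hz : ZeroAtDiag n I)
    (f : ℝ → ℝ) (hf : IsPD fun x1 x2 : ∀ i, X i => f (I x1 x2)) :
    ∀ x1 x2 : ∀ i, X i, f (I x1 x2) = f 0 := by
  intro x y
  obtain ⟨hs, -⟩ := hI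
  have hdiag : ∀ (u v : ∀ i, X i) (i : Fin n), u i = v i → I u v = 0 := by
    intro u v i h
    refine hz u v ⟨{i}, by simp, ?_⟩
    intro j hj
    rw [Finset.mem_singleton] at hj
    subst hj
    exact h
  have hsymm : I y x = I x y := by
    have h := hs x y (fun _ => true)
    have h1 : sel x y (fun _ => true) = y := by funext i; simp [sel]
    have h2 : sel x y (fun _ => !true) = x := by funext i; simp [sel]
    rw [h1, h2] at h
    exact h
  let i0 : Fin n := ⟨0, by omega⟩
  let i1 : Fin n := ⟨1, by omega⟩
  have hne : i1 ≠ i0 := by simp [i0, i1]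
  let z : ∀ i, X i := fun i => if i = i0 then x i else y i
  have hz0 : z i0 = x i0 := by simp [z]
  have hz1 : z i1 = y i1 := by simp [z, hne]
  have e1 : I x x = 0 := hdiag _ _ i0 rfl
  have e2 : I y y = 0 := hdiag _ _ i0 rfl
  have e3 : I z z = 0 := hdiag _ _ i0 rfl
  have e4 : I x z = 0 := hdiag _ _ i0 hz0.symm
  have e5 : I z x = 0 := hdiag _ _ i0 hz0
  have e6 : I z y = 0 := hdiag _ _ i1 hz1
  have e7 : I y z = 0 := hdiag _ _ i1 hz1.symm
  have key : ∀ s : ℝ, 0 ≤ f 0 + 2 * s * (f (I x y) - f 0) := by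
    intro s
    have h := hf 3 ![x, z, y] ![s, -s, 1]
    simp [Fin.sum_univ_three, e1, e2, e3, e4, e5, e6, e7, hsymm] at h
    linarith
  by_contra hb
  have hd : f (I x y) - f 0 ≠ 0 := sub_ne_zero.mpr hb
  have h := key (-(f 0 + 1) / (2 * (f (I x y) - f 0)))
  have : 2 * (-(f 0 + 1) / (2 * (f (I x y) - f 0))) * (f (I x y) - f 0) = -(f 0 + 1) := by
    field_simp
  linarith

end PDIPaper
end
end

section
/- Let 1 ≤ k ≤ n and let 𝕴 : 𝕏_n × 𝕏_n → ℝ be an n-symmetric kernel. Define 𝕴'(x_{1⃗}, x_{2⃗}) := ½ ∫ 𝕴(x_{1⃗}, y) dμ_k^n[x_{2⃗}, x_{1⃗}](y) + ½ ∫ 𝕴(x_{2⃗}, y) dμ_k^n[x_{1⃗}, x_{2⃗}](y). Then: (a) for every discrete measure μ ∈ ℳ_k(𝕏_n), ∫∫ (−1)^k 𝕴' dμ dμ = ∫∫ (−1)^k 𝕴 dμ dμ; (b) 𝕴'(x_{1⃗}, x_{2⃗}) = 0 whenever x_i^1 = x_i^2 for at least n−k+1 indices i; (c) if 𝕴(x_{1⃗},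 x_{2⃗}) = 0 whenever x_i^1 = x_i^2 for at least n−k+1 indices i, then 𝕴' = 𝕴. -/
noncomputable section

open Finset

namespace PDIPaper

variable {ι : Type*} [Fintype ι] [DecidableEq ι] {X : ι → Type*}

/-- The kernel `𝕴'` of Lemma `PDI2simpli`:
`𝕴'(x1,x2) = ½ ∫ 𝕴(x1,y) dμ_k^n[x2,x1](y) + ½ ∫ 𝕴(x2,y) dμ_k^n[x1,x2](y)`. -/
def stmt8Kernel {n : ℕ} {X : Fin n → Type*} (k : ℕ)
    (I : (∀ i, X i) → (∀ i, X i) → ℝ) : (∀ i, X i) → (∀ i, X i) → ℝ :=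
  fun x1 x2 =>
    (1 / 2 : ℝ) * muInt k x2 x1 (fun y => I x1 y) +
      (1 / 2 : ℝ) * muInt k x1 x2 (fun y => I x2 y)

theorem alt_choose {ι : Type*} [DecidableEq ι] (d : ℕ) :
    ∀ (s : Finset ι), s.card = d + 1 → ∀ r : ℤ,
    ∑ H ∈ s.powerset, (-1 : ℤ) ^ H.card * Ring.choose (r - H.card) d = 0 := by
  induction d with
  | zero =>
    intro s hs r
    obtain ⟨a, rfl⟩ := Finset.card_eq_one.mp (by simpa using hs)
    rw [show ({a} : Finset ι) = insert a ∅ from rfl,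
      Finset.sum_powerset_insert (by simp)]
    simp
  | succ d ih =>
    intro s hs r
    obtain ⟨a, t, ha, rfl, ht⟩ := Finset.card_eq_succ.mp hs
    rw [Finset.sum_powerset_insert ha, ← Finset.sum_add_distrib, ← ih t ht (r - 1)]
    refine Finset.sum_congr rfl fun H hH => ?_
    have haH : a ∉ H := fun h => ha (Finset.mem_powerset.mp hH h)
    rw [Finset.card_insert_of_notMem haH]
    have := Ring.choose_succ_succ (r - 1 - (H.card : ℤ)) d
    rw [show r - 1 - (H.card : ℤ) + 1 = r - H.card by ring] at this
    rw [this]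
    push_cast
    rw [show r - ((H.card : ℤ) + 1) = r - 1 - H.card by ring]
    ring

theorem muInt_eq {n k : ℕ} (hk1 : 1 ≤ k) (hk2 : k ≤ n) {X : Fin n → Type*}
    (a b : ∀ i, X i) (f : (∀ i, X i) → ℝ) :
    muInt k a b f = ∑ F ∈ (Finset.univ : Finset (Fin n)).powerset,
      (-1 : ℝ) ^ k * (((-1 : ℤ) ^ F.card * Ring.choose ((n : ℤ) - 1 - F.card) (n - k) : ℤ) : ℝ)
        * f (comb F a b) := by
  rw [Finset.sum_powerset]
  simp only [Finset.card_univ, Fintype.card_fin]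
  rw [Finset.sum_range_succ, ← Finset.sum_range_add_sum_Ico _ hk2]
  have h2 : ∑ j ∈ Finset.Ico k n, ∑ F ∈ Finset.powersetCard j (Finset.univ : Finset (Fin n)),
      (-1 : ℝ) ^ k * (((-1 : ℤ) ^ F.card * Ring.choose ((n : ℤ) - 1 - F.card) (n - k) : ℤ) : ℝ)
        * f (comb F a b) = 0 := by
    refine Finset.sum_eq_zero fun j hj => Finset.sum_eq_zero fun F hF => ?_
    rw [Finset.mem_Ico] at hj
    rw [(Finset.mem_powersetCard.mp hF).2]
    rw [show (n : ℤ) - 1 - j = ((n - j - 1 : ℕ) : ℤ) by omega, Ring.choose_natCast,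
      Nat.choose_eq_zero_of_lt (by omega)]
    simp
  have h3 : ∑ F ∈ Finset.powersetCard n (Finset.univ : Finset (Fin n)),
      (-1 : ℝ) ^ k * (((-1 : ℤ) ^ F.card * Ring.choose ((n : ℤ) - 1 - F.card) (n - k) : ℤ) : ℝ)
        * f (comb F a b) = f a := by
    have : Finset.powersetCard n (Finset.univ : Finset (Fin n)) = {Finset.univ} := by
      have h := Finset.powersetCard_self (Finset.univ : Finset (Fin n))
      rwa [Finset.card_fin] at h
    rw [this, Finset.sum_singleton, Finset.card_fin,
      show (n : ℤ) - 1 - n = -1 by ring]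
    have hc : Ring.choose (-1 : ℤ) (n - k) = (-1) ^ (n - k) := by
      rw [Ring.choose_neg]
      simp [Ring.choose_natCast, Units.smul_def, Int.negOnePow]
    have hcomb : comb (Finset.univ : Finset (Fin n)) a b = a := by
      funext i; simp [comb]
    rw [hc, hcomb]
    push_cast
    rw [← pow_add, ← pow_add, Even.neg_one_pow ⟨n, by omega⟩, one_mul]
  rw [h2, h3, add_zero, muInt, add_comm]
  congr 1
  refine Finset.sum_congr rfl fun j hj => ?_
  rw [Finset.mem_range] at hj
  rw [Finset.mul_sum]
  refine Finset.sum_congr rfl fun F hF => ?_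
  rw [(Finset.mem_powersetCard.mp hF).2]
  rw [show (n : ℤ) - 1 - j = ((n - j - 1 : ℕ) : ℤ) by omega, Ring.choose_natCast]
  simp only [Fintype.card_fin]
  push_cast
  rw [← mul_assoc, ← pow_add, show k + j = (k - j) + 2 * j by omega, pow_add _ _ (2 * j), pow_mul]
  simp

theorem muInt_zero {n k : ℕ} (hk1 : 1 ≤ k) (hk2 : k ≤ n) {X : Fin n → Type*}
    (a b : ∀ i, X i) (f : (∀ i, X i) → ℝ) (s : Finset (Fin n)) (hs : s.card = n - k + 1)
    (hab : ∀ i ∈ s, a i = b i) : muInt k a b f = 0 := by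
  rw [muInt_eq hk1 hk2]
  have : ∑ F ∈ (Finset.univ : Finset (Fin n)).powerset,
      (-1 : ℝ) ^ k * (((-1 : ℤ) ^ F.card * Ring.choose ((n : ℤ) - 1 - F.card) (n - k) : ℤ) : ℝ)
        * f (comb F a b) = ∑ p ∈ sᶜ.powerset ×ˢ s.powerset,
      (-1 : ℝ) ^ k * (((-1 : ℤ) ^ (p.1 ∪ p.2).card *
        Ring.choose ((n : ℤ) - 1 - (p.1 ∪ p.2).card) (n - k) : ℤ) : ℝ)
        * f (comb (p.1 ∪ p.2) a b) := by
    refine Finset.sum_nbij' (fun F => (F \ s, F ∩ s)) (fun p => p.1 ∪ p.2) ?_ ?_ ?_ ?_ ?_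
    · intro F _
      simp only [Finset.mem_product, Finset.mem_powerset]
      constructor
      · intro i; simp
      · intro i; simp
    · intro p _; simp
    · intro F _; exact Finset.sdiff_union_inter F s
    · intro p hp
      simp only [Finset.mem_product, Finset.mem_powerset] at hp
      ext i
      · have h1 := @hp.1 i
        have h2 := @hp.2 i
        simp only [Finset.mem_compl] at h1
        simp only [Finset.mem_sdiff, Finset.mem_union]; tauto
      · have h1 := @hp.1 i
        have h2 := @hp.2 i
        simp only [Finset.mem_compl] at h1
        simp only [Finset.mem_inter, Finset.mem_union]; tauto
    · intro F _
      simp only [Finset.sdiff_union_inter F s]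
  rw [this, Finset.sum_product]
  refine Finset.sum_eq_zero fun G hG => ?_
  have key := alt_choose (n - k) s hs ((n : ℤ) - 1 - G.card)
  have key' := congrArg (fun z : ℤ => (-1 : ℝ) ^ k * (-1) ^ G.card * (z : ℝ) * f (comb G a b)) key
  simp only [Int.cast_zero, mul_zero, zero_mul] at key'
  rw [← key', Int.cast_sum, Finset.mul_sum, Finset.sum_mul]
  refine Finset.sum_congr rfl fun H hH => ?_
  rw [Finset.mem_powerset] at hG hH
  have hd : Disjoint G H := by
    rw [Finset.disjoint_left]
    intro i hi hi'
    exact Finset.mem_compl.mp (hG hi) (hH hi')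
  have hcomb : comb (G ∪ H) a b = comb G a b := by
    funext i
    simp only [comb, Finset.mem_union]
    by_cases h1 : i ∈ G
    · simp [h1]
    · by_cases h2 : i ∈ H
      · simp [h1, h2, hab i (hH h2)]
      · simp [h1, h2]
  simp only [hcomb, Finset.card_union_of_disjoint hd]
  push_cast
  rw [show (n : ℤ) - 1 - (G.card + H.card) = (n : ℤ) - 1 - G.card - H.card by ring, pow_add]
  ring

theorem sum_indep_zero {n k m : ℕ} (c : (Fin n → Fin m) → ℝ) (hc : MemM k c)
    (F : Finset (Fin n)) (hF : F.card = n - k + 1) (h : (Fin n → Fin m) → ℝ)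
    (hh : ∀ β β', (∀ i, i ∉ F → β i = β' i) → h β = h β') :
    ∑ β, c β * h β = 0 := by
  rw [← (Equiv.piEquivPiSubtypeProd (fun i => i ∈ F) (fun _ => Fin m)).symm.sum_comp,
    Fintype.sum_prod_type_right]
  refine Finset.sum_eq_zero fun b _ => ?_
  rcases isEmpty_or_nonempty ({i // i ∈ F} → Fin m) with he | ⟨⟨σ0⟩⟩
  · exact Finset.sum_eq_zero fun σ _ => he.elim σ
  · set e := (Equiv.piEquivPiSubtypeProd (fun i => i ∈ F) (fun _ => Fin m)).symm with hedef
    have h1 : ∀ σ, h (e (σ, b)) = h (e (σ0, b)) := by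
      intro σ
      apply hh
      intro i hi
      simp [hedef, Equiv.piEquivPiSubtypeProd, hi]
    simp only [h1]
    rw [← Finset.sum_mul]
    have := hc F (by simpa using hF) (e (σ0, b))
    have h2 : ∑ σ : {i // i ∈ F} → Fin m, c (e (σ, b)) = 0 := by
      rw [← this]
      refine Finset.sum_congr rfl fun σ _ => ?_
      congr 1
      funext i
      by_cases hi : i ∈ F <;> simp [hedef, Equiv.piEquivPiSubtypeProd, hi]
    erw [h2]
    simp

theorem NSymm.swap {n : ℕ} {X : Fin n → Type*} {I : (∀ i, X i) → (∀ i, X i) → ℝ}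
    (hsym : NSymm I) (a b : ∀ i, X i) : I b a = I a b := by
  have := hsym a b (fun _ => true)
  have h1 : sel a b (fun _ => true) = b := by funext i; simp [sel]
  have h2 : sel a b (fun i => !((fun _ => true : Fin n → Bool) i)) = a := by
    funext i; simp [sel]
  rw [h1, h2] at this
  exact this

theorem inner_sum {n k m : ℕ} (hk2 : k ≤ n) {X : Fin n → Type*}
    (x : ∀ i, Fin m → X i) (c : (Fin n → Fin m) → ℝ) (hc : MemM k c)
    (a : ∀ i, X i) (f : (∀ i, X i) → ℝ) :
    ∑ β, c β * muInt k (gridPt x β) a f = ∑ β, c β * f (gridPt x β) := by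
  simp only [muInt, mul_add, Finset.sum_add_distrib]
  rw [add_eq_left]
  simp only [Finset.mul_sum]
  rw [Finset.sum_comm]
  refine Finset.sum_eq_zero fun j hj => ?_
  rw [Finset.sum_comm]
  refine Finset.sum_eq_zero fun F hF => ?_
  rw [Finset.mem_range] at hj
  have hFc := (Finset.mem_powersetCard.mp hF).2
  obtain ⟨T, hT, hTc⟩ := Finset.exists_subset_card_eq (s := Fᶜ) (n := n - k + 1)
    (by rw [Finset.card_compl, Fintype.card_fin]; omega)
  apply sum_indep_zero c hc T hTc (fun β => _)
  intro β β' hb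
  have : comb F (gridPt x β) a = comb F (gridPt x β') a := by
    funext i
    simp only [comb]
    split_ifs with hi
    · simp only [gridPt]
      rw [hb i (fun h => Finset.mem_compl.mp (hT h) hi)]
    · rfl
  simp only [this]

theorem statement8 {n k : ℕ} (hk1 : 1 ≤ k) (hk2 : k ≤ n) (X : Fin n → Type*)
    (I : (∀ i, X i) → (∀ i, X i) → ℝ) (hsym : NSymm I) :
    (∀ (m : ℕ) (x : ∀ i, Fin m → X i), (∀ i, Function.Injective (x i)) →
      ∀ c : (Fin n → Fin m) → ℝ, MemM k c →
        (-1 : ℝ) ^ k * dSum (stmt8Kernel k I) x c = (-1 : ℝ) ^ k * dSum I x c) ∧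
      ZeroAtDiag k (stmt8Kernel k I) ∧
      (ZeroAtDiag k I → stmt8Kernel k I = I) := by
  refine ⟨?_, ?_, ?_⟩
  · intro m x _ c hc
    congr 1
    have hA : ∑ α, ∑ β, c α * c β *
        muInt k (gridPt x β) (gridPt x α) (fun y => I (gridPt x α) y) = dSum I x c := by
      unfold dSum
      refine Finset.sum_congr rfl fun α _ => ?_
      simp only [mul_assoc]
      rw [← Finset.mul_sum, ← Finset.mul_sum, inner_sum hk2 x c hc]
    have hB : ∑ α, ∑ β, c α * c β *
        muInt k (gridPt x α) (gridPt x β) (fun y => I (gridPt x β) y) = dSum I x c := by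
      rw [Finset.sum_comm, ← hA]
      refine Finset.sum_congr rfl fun α _ => Finset.sum_congr rfl fun β _ => ?_
      rw [mul_comm (c β)]
    have : dSum (stmt8Kernel k I) x c = (1 / 2) * (∑ α, ∑ β, c α * c β *
        muInt k (gridPt x β) (gridPt x α) (fun y => I (gridPt x α) y)) +
        (1 / 2) * ∑ α, ∑ β, c α * c β *
        muInt k (gridPt x α) (gridPt x β) (fun y => I (gridPt x β) y) := by
      simp only [dSum, stmt8Kernel, Finset.mul_sum, ← Finset.sum_add_distrib]
      refine Finset.sum_congr rfl fun α _ => Finset.sum_congr rfl fun β _ => ?_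
      ring
    rw [this, hA, hB]
    ring
  · rintro x1 x2 ⟨s, hs, h⟩
    rw [Fintype.card_fin] at hs
    simp only [stmt8Kernel]
    rw [muInt_zero hk1 hk2 x2 x1 _ s hs (fun i hi => (h i hi).symm),
      muInt_zero hk1 hk2 x1 x2 _ s hs h]
    ring
  · intro hz
    have hmu : ∀ a b : ∀ i, X i, muInt k b a (fun y => I a y) = I a b := by
      intro a b
      rw [muInt, add_eq_left]
      refine Finset.sum_eq_zero fun j hj => ?_
      rw [Finset.mem_range] at hj
      rw [Finset.sum_eq_zero, mul_zero]
      intro F hF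
      have hFc := (Finset.mem_powersetCard.mp hF).2
      obtain ⟨T, hT, hTc⟩ := Finset.exists_subset_card_eq (s := Fᶜ) (n := n - k + 1)
        (by rw [Finset.card_compl, Fintype.card_fin]; omega)
      refine hz _ _ ⟨T, by simpa using hTc, fun i hi => ?_⟩
      simp [comb, Finset.mem_compl.mp (hT hi)]
    funext x1 x2
    simp only [stmt8Kernel]
    rw [hmu, hmu, hsym.swap x1 x2]
    ring

end PDIPaper
end
end

section
/- Let n ≥ k ≥ 0, let γ_i : X_i × X_i → [0,∞) (1 ≤ i ≤ n) be CND kernels, and let g : [0,∞)^n → ℝ be a continuous function that vanishes on ∂_{k−1}^n and whose restriction to (0,∞)^n is a Bernstein function of order k. Then the kernel 𝕴_g^γ(x_{1⃗}, x_{2⃗}) := g(γ_1(x_1^1, x_1^2), …, γ_n(x_n^1, x_n^2)) is PDI_k on 𝕏_n. -/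
noncomputable section

open Finset

namespace PDIPaper

variable {ι : Type*} [Fintype ι] [DecidableEq ι] {X : ι → Type*}

/-- Partial derivative of a function of `n` real variables in coordinate `i`. -/
def pderiv' {n : ℕ} (i : Fin n) (h : (Fin n → ℝ) → ℝ) : (Fin n → ℝ) → ℝ :=
  fun t => deriv (fun s : ℝ => h (Function.update t i s)) (t i)

/-- Iterated partial derivative in coordinate `i`. -/
def pderivPow {n : ℕ} (i : Fin n) : ℕ → ((Fin n → ℝ) → ℝ) → (Fin n → ℝ) → ℝ
  | 0 => fun h => h
  | j + 1 => fun h => pderiv' i (pderivPow i j h)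

/-- Mixed partial derivative `∂^α h` for a multi-index `α`. -/
def pderivMulti {n : ℕ} (α : Fin n → ℕ) (h : (Fin n → ℝ) → ℝ) : (Fin n → ℝ) → ℝ :=
  (List.finRange n).foldr (fun i acc => pderivPow i (α i) acc) h

/-- `h` is completely monotone with `n` variables: it is `C^∞` on `(0,∞)^n` and
`(-1)^{|α|} ∂^α h(t) ≥ 0` for every multi-index `α` and every `t ∈ (0,∞)^n`. -/
def CompletelyMonotoneN {n : ℕ} (h : (Fin n → ℝ) → ℝ) : Prop :=
  (∀ N : ℕ, ContDiffOn ℝ N h {t : Fin n → ℝ | ∀ i, 0 < t i}) ∧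
    ∀ (α : Fin n → ℕ) (t : Fin n → ℝ), (∀ i, 0 < t i) →
      0 ≤ (-1 : ℝ) ^ (∑ i, α i) * pderivMulti α h t

/-- `g` is a Bernstein function of order `k` on `(0,∞)^n`: it is `C^∞` there and for
every `F ⊆ {1,…,n}` with `|F| = k` the mixed partial `∂^{1_F} g` is completely
monotone with `n` variables. -/
def BernsteinOrder {n : ℕ} (k : ℕ) (g : (Fin n → ℝ) → ℝ) : Prop :=
  (∀ N : ℕ, ContDiffOn ℝ N g {t : Fin n → ℝ | ∀ i, 0 < t i}) ∧
    ∀ F : Finset (Fin n), F.card = k →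
      CompletelyMonotoneN (pderivMulti (fun i => if i ∈ F then 1 else 0) g)


/-- open orthant -/
def UU (n : ℕ) : Set (Fin n → ℝ) := {t | ∀ i, 0 < t i}

lemma UU_open (n : ℕ) : IsOpen (UU n) := by
  have : UU n = ⋂ i, {t : Fin n → ℝ | 0 < t i} := by ext; simp [UU]
  rw [this]
  exact isOpen_iInter_of_finite fun i => isOpen_lt continuous_const (continuous_apply i)

def SM {n : ℕ} (f : (Fin n → ℝ) → ℝ) : Prop := ∀ N : ℕ, ContDiffOn ℝ N f (UU n)

lemma SM.diffAt {n : ℕ} {f : (Fin n → ℝ) → ℝ} (hf : SM f) {t : Fin n → ℝ} (ht : t ∈ UU n) :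
    DifferentiableAt ℝ f t :=
  ((hf 1).differentiableOn (by norm_num)).differentiableAt ((UU_open n).mem_nhds ht)

lemma SM.hasDeriv {n : ℕ} {f : (Fin n → ℝ) → ℝ} (hf : SM f) {t : Fin n → ℝ} (i : Fin n) (s : ℝ)
    (ht : Function.update t i s ∈ UU n) :
    HasDerivAt (fun s : ℝ => f (Function.update t i s))
      (fderiv ℝ f (Function.update t i s) (Pi.single i 1)) s := by
  have h1 := (hf.diffAt ht).hasFDerivAt
  exact h1.comp_hasDerivAt s (hasDerivAt_update t i s)

lemma SM.pderiv_eq {n : ℕ} {f : (Fin n → ℝ) → ℝ} (hf : SM f) {t : Fin n → ℝ} (i : Fin n)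
    (ht : t ∈ UU n) : pderiv' i f t = fderiv ℝ f t (Pi.single i 1) := by
  have := hf.hasDeriv (t := t) i (t i) (by simpa using ht)
  simpa [pderiv'] using this.deriv

lemma SM.pderiv {n : ℕ} {f : (Fin n → ℝ) → ℝ} (hf : SM f) (i : Fin n) : SM (pderiv' i f) := by
  intro N
  have h1 : ContDiffOn ℝ N (fun t => fderiv ℝ f t (Pi.single i 1)) (UU n) := by
    have : ContDiffOn ℝ N (fun t => fderiv ℝ f t) (UU n) :=
      (hf (N+1)).fderiv_of_isOpen (UU_open n) (by norm_cast)
    exact this.clm_apply contDiffOn_const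
  exact h1.congr fun t ht => hf.pderiv_eq i ht

/-- shift -/
def sh {n : ℕ} (h : ℝ) (i : Fin n) (t : Fin n → ℝ) : Fin n → ℝ := t + Pi.single i h

/-- negative difference -/
def nd {n : ℕ} (h : ℝ) (i : Fin n) (f : (Fin n → ℝ) → ℝ) : (Fin n → ℝ) → ℝ :=
  fun t => f t - f (sh h i t)

lemma sh_mem {n : ℕ} {h : ℝ} (hh : 0 ≤ h) (i : Fin n) {t : Fin n → ℝ} (ht : t ∈ UU n) :
    sh h i t ∈ UU n := by
  intro j
  have := ht j
  by_cases hj : j = i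
  · subst hj; simp [sh]; linarith
  · simp [sh, hj, this]

lemma SM.comp_sh {n : ℕ} {f : (Fin n → ℝ) → ℝ} (hf : SM f) {h : ℝ} (hh : 0 ≤ h) (i : Fin n) :
    SM (fun t => f (sh h i t)) := by
  intro N
  refine (hf N).comp (f := sh h i) ?_ fun t ht => sh_mem hh i ht
  unfold sh
  exact contDiffOn_id.add contDiffOn_const

lemma SM.nd {n : ℕ} {f : (Fin n → ℝ) → ℝ} (hf : SM f) {h : ℝ} (hh : 0 ≤ h) (i : Fin n) :
    SM (nd h i f) := fun N => (hf N).sub (hf.comp_sh hh i N)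

lemma pderiv_nd {n : ℕ} {f : (Fin n → ℝ) → ℝ} (hf : SM f) {h : ℝ} (hh : 0 ≤ h) (i j : Fin n)
    {t : Fin n → ℝ} (ht : t ∈ UU n) : pderiv' j (nd h i f) t = nd h i (pderiv' j f) t := by
  rw [(hf.nd hh i).pderiv_eq j ht]
  have h1 : HasFDerivAt (nd h i f) (fderiv ℝ f t - fderiv ℝ f (sh h i t)) t := by
    refine (hf.diffAt ht).hasFDerivAt.sub ?_
    have := (hf.diffAt (sh_mem hh i ht)).hasFDerivAt
    have h2 : HasFDerivAt (sh h i) (ContinuousLinearMap.id ℝ _) t :=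
      (hasFDerivAt_id t).add_const _
    have h3 := this.comp t h2
    rw [ContinuousLinearMap.comp_id] at h3
    exact h3
  rw [h1.fderiv]
  simp [nd, hf.pderiv_eq j ht, hf.pderiv_eq j (sh_mem hh i ht)]

lemma nd_sign {n : ℕ} {f : (Fin n → ℝ) → ℝ} (hf : SM f) {h : ℝ} (hh : 0 < h) (i : Fin n) (s : ℝ)
    (hs : ∀ t ∈ UU n, 0 ≤ -s * pderiv' i f t) {t : Fin n → ℝ} (ht : t ∈ UU n) :
    0 ≤ s * nd h i f t := by
  have hmem : ∀ u, t i ≤ u → Function.update t i u ∈ UU n := by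
    intro u hu j
    by_cases hj : j = i
    · subst hj; simp; linarith [ht j]
    · simp [hj, ht j]
  have hA : AntitoneOn (fun u => s * f (Function.update t i u)) (Set.Ici (t i)) := by
    refine antitoneOn_of_deriv_nonpos (convex_Ici _) ?_ ?_ ?_
    · intro u hu
      exact ((hf.hasDeriv i u (hmem u hu)).const_mul s).continuousAt.continuousWithinAt
    · intro u hu
      rw [interior_Ici] at hu
      exact ((hf.hasDeriv i u (hmem u hu.le)).const_mul s).differentiableAt.differentiableWithinAt
    · intro u hu
      rw [interior_Ici] at hu
      rw [((hf.hasDeriv i u (hmem u hu.le)).const_mul s).deriv, ← hf.pderiv_eq i (hmem u hu.le)]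
      linarith [hs _ (hmem u hu.le)]
  have := hA (Set.mem_Ici.2 le_rfl) (show t i + h ∈ Set.Ici (t i) by simp [hh.le]) (by linarith)
  have e : Function.update t i (t i + h) = sh h i t := by
    ext j
    by_cases hj : j = i
    · subst hj; simp [sh]
    · simp [sh, hj]
  simp only [e, Function.update_eq_self] at this
  simp only [nd]; linarith

/-- iterated derivative along a list, first element applied first -/
def pdl {n : ℕ} : List (Fin n) → ((Fin n → ℝ) → ℝ) → ((Fin n → ℝ) → ℝ)
  | [], f => f
  | i :: L, f => pdl L (pderiv' i f)

def ndl {n : ℕ} (h : ℝ) : List (Fin n) → ((Fin n → ℝ) → ℝ) → ((Fin n → ℝ) → ℝ)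
  | [], f => f
  | i :: L, f => nd h i (ndl h L f)

lemma SM.ndl {n : ℕ} {f : (Fin n → ℝ) → ℝ} (hf : SM f) {h : ℝ} (hh : 0 ≤ h) (L : List (Fin n)) :
    SM (ndl h L f) := by
  induction L with
  | nil => exact hf
  | cons i L ih => exact ih.nd hh i

lemma nd_congr {n : ℕ} {f g : (Fin n → ℝ) → ℝ} {h : ℝ} (hh : 0 ≤ h) (i : Fin n)
    (H : ∀ t ∈ UU n, f t = g t) : ∀ t ∈ UU n, nd h i f t = nd h i g t := by
  intro t ht
  simp [nd, H t ht, H _ (sh_mem hh i ht)]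

lemma pderiv_ndl {n : ℕ} {f : (Fin n → ℝ) → ℝ} (hf : SM f) {h : ℝ} (hh : 0 ≤ h)
    (L : List (Fin n)) (j : Fin n) :
    ∀ t ∈ UU n, pderiv' j (ndl h L f) t = ndl h L (pderiv' j f) t := by
  induction L with
  | nil => intro t _; rfl
  | cons i L ih =>
    intro t ht
    show pderiv' j (nd h i (ndl h L f)) t = _
    rw [pderiv_nd (hf.ndl hh L) hh i j ht]
    exact nd_congr hh i ih t ht

lemma ndl_sign {n : ℕ} (h : ℝ) (hh : 0 < h) (L : List (Fin n)) :
    ∀ (f : (Fin n → ℝ) → ℝ) (_ : SM f) (s : ℝ)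
    (_ : ∀ t ∈ UU n, 0 ≤ s * (-1) ^ L.length * pdl L f t), ∀ t ∈ UU n,
    0 ≤ s * ndl h L f t := by
  induction L with
  | nil => intro f _ s hs t ht; simpa [pdl, ndl] using hs t ht
  | cons i L ih =>
    intro f hf s hs t ht
    refine nd_sign (hf.ndl hh.le L) hh i s (fun u hu => ?_) ht
    rw [pderiv_ndl hf hh.le L i u hu]
    refine ih _ (hf.pderiv i) (-s) (fun v hv => ?_) u hu
    have := hs v hv
    simp only [pdl, List.length_cons, pow_succ] at this
    linarith

lemma pdl_append {n : ℕ} (L M : List (Fin n)) (f : (Fin n → ℝ) → ℝ) :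
    pdl (L ++ M) f = pdl M (pdl L f) := by
  induction L generalizing f with
  | nil => rfl
  | cons i L ih => exact ih _

lemma pderivPow_list {n : ℕ} (i : Fin n) (a : ℕ) (f : (Fin n → ℝ) → ℝ) :
    pderivPow i a f = pdl (List.replicate a i) f := by
  induction a with
  | zero => rfl
  | succ a ih =>
    rw [List.replicate_succ', pdl_append, ← ih]; rfl

lemma pderivMulti_list {n : ℕ} (α : Fin n → ℕ) :
    ∃ L : List (Fin n), (∀ f, pderivMulti α f = pdl L f) ∧ L.length = ∑ i, α i ∧
      ∀ (u : Fin n → MvPolynomial (Fin n) ℝ), (L.map u).prod = ∏ i, u i ^ α i := by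
  have key : ∀ M : List (Fin n), ∃ L : List (Fin n),
      (∀ f, M.foldr (fun i acc => pderivPow i (α i) acc) f = pdl L f) ∧
      L.length = (M.map α).sum ∧
      ∀ (u : Fin n → MvPolynomial (Fin n) ℝ), (L.map u).prod = (M.map fun i => u i ^ α i).prod := by
    intro M
    induction M with
    | nil => exact ⟨[], fun f => rfl, rfl, fun u => rfl⟩
    | cons i M ih =>
      obtain ⟨L, h1, h2, h3⟩ := ih
      refine ⟨L ++ List.replicate (α i) i, fun f => ?_, ?_, fun u => ?_⟩
      · rw [List.foldr_cons, h1, pderivPow_list, pdl_append]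
      · simp [h2, add_comm]
      · simp [h3, mul_comm]
  obtain ⟨L, h1, h2, h3⟩ := key (List.finRange n)
  refine ⟨L, h1, ?_, fun u => ?_⟩
  · rw [h2, Fin.sum_univ_def]
  · rw [h3, Fin.prod_univ_def]

def ell {n : ℕ} (h : ℝ) (f : (Fin n → ℝ) → ℝ) : MvPolynomial (Fin n) ℝ →ₗ[ℝ] ℝ :=
  (MvPolynomial.basisMonomials (Fin n) ℝ).constr ℝ (fun s => f (fun l => ((s l : ℝ) + 1) * h))

lemma ell_monomial {n : ℕ} (h : ℝ) (f : (Fin n → ℝ) → ℝ) (s : Fin n →₀ ℕ) :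
    ell h f (MvPolynomial.monomial s 1) = f (fun l => ((s l : ℝ) + 1) * h) := by
  have := (MvPolynomial.basisMonomials (Fin n) ℝ).constr_basis ℝ
    (fun s => f (fun l => ((s l : ℝ) + 1) * h)) s
  simpa [MvPolynomial.coe_basisMonomials, ell] using this

lemma ell_mul {n : ℕ} (h : ℝ) (f : (Fin n → ℝ) → ℝ) (i : Fin n) (q : MvPolynomial (Fin n) ℝ) :
    ell h f ((1 - MvPolynomial.X i) * q) = ell h (nd h i f) q := by
  have : (ell h f).comp (LinearMap.mulLeft ℝ (1 - MvPolynomial.X i)) = ell h (nd h i f) := by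
    refine (MvPolynomial.basisMonomials (Fin n) ℝ).ext fun s => ?_
    simp only [MvPolynomial.coe_basisMonomials, LinearMap.comp_apply, LinearMap.mulLeft_apply]
    rw [sub_mul, one_mul, map_sub, ell_monomial, ell_monomial, MvPolynomial.X,
      MvPolynomial.monomial_mul, one_mul, ell_monomial, nd]
    congr 2
    ext l
    by_cases hl : l = i
    · subst hl; simp [sh]; ring
    · simp [sh, hl]
  exact LinearMap.congr_fun this q

lemma ell_list {n : ℕ} (h : ℝ) (f : (Fin n → ℝ) → ℝ) (L : List (Fin n)) :
    ∀ (q : MvPolynomial (Fin n) ℝ),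
    ell h f ((L.map fun i => 1 - MvPolynomial.X i).prod * q) = ell h (ndl h L f) q := by
  induction L with
  | nil => intro q; simp [ndl]
  | cons i L ih =>
    intro q
    rw [List.map_cons, List.prod_cons, mul_comm (1 - _), mul_assoc, ih, ell_mul]; rfl

lemma ell_sign {n k : ℕ} {h : ℝ} (hh : 0 < h) {g : (Fin n → ℝ) → ℝ} (hg : BernsteinOrder k g)
    (α : Fin n → ℕ) (p : Fin n →₀ ℕ) (hα : k ≤ (univ.filter fun i => α i ≠ 0).card) :
    0 ≤ (-1) ^ k * ell h g (MvPolynomial.monomial p 1 * ∏ i, (1 - MvPolynomial.X i) ^ α i) := by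
  obtain ⟨F, hF, hFk⟩ := Finset.exists_subset_card_eq hα
  have hcm := hg.2 F hFk
  obtain ⟨L1, a1, b1, c1⟩ := pderivMulti_list (fun i => if i ∈ F then 1 else 0)
  obtain ⟨L2, a2, b2, c2⟩ := pderivMulti_list (fun i => α i - if i ∈ F then 1 else 0)
  have e : (∏ i, (1 - MvPolynomial.X i : MvPolynomial (Fin n) ℝ) ^ α i)
      = ((L1 ++ L2).map fun i => 1 - MvPolynomial.X i).prod := by
    rw [List.map_append, List.prod_append, c1, c2, ← Finset.prod_mul_distrib]
    refine Finset.prod_congr rfl fun i _ => ?_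
    rw [← pow_add]
    congr 1
    split_ifs with hi
    · have := (Finset.mem_filter.1 (hF hi)).2
      omega
    · simp
  rw [mul_comm (MvPolynomial.monomial p 1), e, ell_list, ell_monomial]
  refine ndl_sign h hh _ g hg.1 _ (fun t ht => ?_) _ (fun l => by positivity)
  have := hcm.2 (fun i => α i - if i ∈ F then 1 else 0) t ht
  rw [a2, a1] at this
  rw [pdl_append, List.length_append, b2, b1]
  have hk : (∑ i, if i ∈ F then 1 else 0) = k := by simp [hFk]
  rw [hk, pow_add, ← mul_assoc, ← mul_pow]
  simpa using this

def ww (N j i : ℕ) : ℝ := (i.choose j : ℝ) / (N.choose j : ℝ)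

lemma ww_zero (N i : ℕ) : ww N 0 i = 1 := by simp [ww]

lemma ww_one (N i : ℕ) : ww N 1 i = (i : ℝ) / N := by simp [ww]

lemma ww_self {N j : ℕ} (h : j ≤ N) : ww N j N = 1 := by
  have : (0 : ℝ) < N.choose j := by exact_mod_cast Nat.choose_pos h
  simp [ww, this.ne']

def bb {n : ℕ} (N i : ℕ) (x : MvPolynomial (Fin n) ℝ) : MvPolynomial (Fin n) ℝ :=
  MvPolynomial.C (N.choose i : ℝ) * (x ^ i * (1 - x) ^ (N - i))

lemma bern1 {n N j : ℕ} (hj : j ≤ N) (x : MvPolynomial (Fin n) ℝ) :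
    x ^ j = ∑ i : Fin (N + 1), MvPolynomial.C (ww N j i) * bb N i x := by
  rw [Fin.sum_univ_eq_sum_range (fun i => MvPolynomial.C (ww N j i) * bb N i x) (N + 1)]
  have hN : N + 1 = j + (N - j + 1) := by omega
  rw [hN, Finset.sum_range_add]
  have h0 : ∑ i ∈ range j, MvPolynomial.C (ww N j i) * bb N i x = 0 := by
    refine Finset.sum_eq_zero fun i hi => ?_
    simp [ww, Nat.choose_eq_zero_of_lt (Finset.mem_range.1 hi)]
  rw [h0, zero_add]
  have h1 : x ^ j = x ^ j * (x + (1 - x)) ^ (N - j) := by simp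
  rw [h1, add_pow, Finset.mul_sum]
  refine Finset.sum_congr rfl fun r hr => ?_
  have hr' : r ≤ N - j := by have := Finset.mem_range.1 hr; omega
  have hpos : (0 : ℝ) < N.choose j := by exact_mod_cast Nat.choose_pos hj
  have hc : ww N j (j + r) * (N.choose (j + r) : ℝ) = ((N - j).choose r : ℝ) := by
    have := Nat.choose_mul (n := N) (k := j + r) (s := j) (by omega)
    rw [Nat.add_sub_cancel_left] at this
    have h2 : (N.choose (j + r) : ℝ) * (j + r).choose j = N.choose j * (N - j).choose r := by
      exact_mod_cast this
    rw [ww, div_mul_eq_mul_div, div_eq_iff hpos.ne']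
    linarith
  rw [bb, ← mul_assoc (MvPolynomial.C _) (MvPolynomial.C _), ← MvPolynomial.C_mul, hc, map_natCast, pow_add, Nat.sub_sub]
  ring

lemma bernprod {n N : ℕ} (q : Fin n → MvPolynomial (Fin n) ℝ) (φ : Fin n → Fin (N + 1) → ℝ)
    (H : ∀ l, q l = ∑ i : Fin (N + 1), MvPolynomial.C (φ l i) * bb N i (MvPolynomial.X l)) :
    ∏ l, q l = ∑ i : Fin n → Fin (N + 1), (∏ l, φ l (i l)) •
      ∏ l, bb N (i l) (MvPolynomial.X l) := by
  rw [Finset.prod_congr rfl fun l _ => H l, Fintype.prod_sum]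
  refine Finset.sum_congr rfl fun i _ => ?_
  rw [Finset.prod_mul_distrib, MvPolynomial.smul_eq_C_mul, map_prod]

lemma ww_bounds {N i : ℕ} (hi : i ≤ N) : ∀ j, j ≤ N → 0 ≤ ww N j i ∧ ww N j i ≤ 1 := by
  intro j hj
  have hpos : (0 : ℝ) < N.choose j := by exact_mod_cast Nat.choose_pos hj
  refine ⟨by unfold ww; positivity, ?_⟩
  rw [ww, div_le_one hpos]
  exact_mod_cast Nat.choose_le_choose j hi

lemma ww_succ {N i j : ℕ} (hj : j < N) :
    ww N (j + 1) i = ww N j i * (((i : ℝ) - j) / ((N : ℝ) - j)) := by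
  have hr : ∀ a : ℕ, (a.choose (j + 1) : ℝ) * (j + 1) = a.choose j * ((a : ℝ) - j) := by
    intro a
    rcases le_or_gt j a with h | h
    · rw [← Nat.cast_sub h]; exact_mod_cast Nat.choose_succ_right_eq a j
    · simp [Nat.choose_eq_zero_of_lt h, Nat.choose_eq_zero_of_lt (Nat.lt_succ_of_lt h)]
  have h1 := hr i
  have h2 := hr N
  have p1 : (0 : ℝ) < N.choose j := by exact_mod_cast Nat.choose_pos hj.le
  have p2 : (0 : ℝ) < N.choose (j + 1) := by exact_mod_cast Nat.choose_pos hj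
  have p3 : (0 : ℝ) < (N : ℝ) - j := by
    have : (j : ℝ) < N := by exact_mod_cast hj
    linarith
  have p4 : (0 : ℝ) < (j : ℝ) + 1 := by positivity
  rw [ww, ww, div_mul_div_comm, div_eq_div_iff p2.ne' (mul_pos p1 p3).ne', ← h1, ← h2]
  ring

lemma ww_close {N i J : ℕ} (hi : i ≤ N) (hN : 0 < N) (hJ : 2 * J ≤ N) : ∀ j, j ≤ J →
    |ww N j i - ((i : ℝ) / N) ^ j| ≤ 2 * J * j / N * (1 - (i : ℝ) / N) := by
  have hN' : (0 : ℝ) < N := by exact_mod_cast hN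
  have hi' : (i : ℝ) ≤ N := by exact_mod_cast hi
  have hx1 : (i : ℝ) / N ≤ 1 := (div_le_one hN').2 hi'
  have hx0 : 0 ≤ (i : ℝ) / N := by positivity
  intro j
  induction j with
  | zero => intro _; simp [ww_zero]
  | succ j ih =>
    intro hj
    have ih := ih (by omega)
    obtain ⟨w0, w1⟩ := ww_bounds hi j (by omega)
    have hjN : (2 * J : ℝ) ≤ N := by exact_mod_cast hJ
    have hjJ : (j : ℝ) + 1 ≤ J := by exact_mod_cast hj
    have p3 : (0 : ℝ) < (N : ℝ) - j := by linarith [(Nat.cast_nonneg j : (0:ℝ) ≤ j)]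
    rw [ww_succ (by omega)]
    set x := (i : ℝ) / N with hx
    have e : ((i : ℝ) - j) / ((N : ℝ) - j) = x - j / ((N : ℝ) - j) * (1 - x) := by
      rw [hx]; field_simp; ring
    have hb : (j : ℝ) / ((N : ℝ) - j) ≤ 2 * J / N := by
      rw [div_le_div_iff₀ p3 hN']
      have : (0 : ℝ) ≤ j := Nat.cast_nonneg j
      nlinarith
    have hb0 : 0 ≤ (j : ℝ) / ((N : ℝ) - j) := by positivity
    have e2 : ww N j i * (((i : ℝ) - j) / ((N : ℝ) - j)) - x ^ (j + 1)
        = (ww N j i - x ^ j) * x - ww N j i * (j / ((N : ℝ) - j) * (1 - x)) := by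
      rw [e]; ring
    rw [e2]
    have hq : 0 ≤ (j : ℝ) / ((N : ℝ) - j) * (1 - x) := mul_nonneg hb0 (by linarith)
    calc _ ≤ |(ww N j i - x ^ j) * x| + |ww N j i * (j / ((N : ℝ) - j) * (1 - x))| := abs_sub _ _
      _ ≤ |ww N j i - x ^ j| + j / ((N : ℝ) - j) * (1 - x) := by
        refine add_le_add ?_ ?_
        · rw [abs_mul, abs_of_nonneg hx0]
          exact mul_le_of_le_one_right (abs_nonneg _) hx1
        · rw [abs_of_nonneg (mul_nonneg w0 hq)]
          exact mul_le_of_le_one_left hq w1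
      _ ≤ 2 * J * j / N * (1 - x) + 2 * J / N * (1 - x) := by
        gcongr
      _ = _ := by push_cast; ring

lemma prod_close {ι : Type*} (G : Finset ι) (u v y : ι → ℝ) (M ε : ℝ) (hM : 0 ≤ M)
    (hε : 0 ≤ ε) (hy : ∀ l, 0 ≤ y l) (hu : ∀ l, |u l| ≤ M * y l) (hv : ∀ l, |v l| ≤ M * y l)
    (huv : ∀ l, |u l - v l| ≤ ε * (M * y l)) :
    |∏ l ∈ G, u l - ∏ l ∈ G, v l| ≤ G.card * ε * ∏ l ∈ G, (M * y l) := by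
  classical
  induction G using Finset.induction_on with
  | empty => simp
  | insert a G ha ih =>
    rw [Finset.prod_insert ha, Finset.prod_insert ha, Finset.prod_insert ha,
      Finset.card_insert_of_notMem ha]
    have hP : 0 ≤ ∏ l ∈ G, (M * y l) := Finset.prod_nonneg fun l _ => mul_nonneg hM (hy l)
    have hQ : |∏ l ∈ G, v l| ≤ ∏ l ∈ G, (M * y l) := by
      rw [Finset.abs_prod]
      exact Finset.prod_le_prod (fun _ _ => abs_nonneg _) fun l _ => hv l
    have e : u a * ∏ l ∈ G, u l - v a * ∏ l ∈ G, v l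
      = u a * (∏ l ∈ G, u l - ∏ l ∈ G, v l) + (u a - v a) * ∏ l ∈ G, v l := by ring
    have hya := mul_nonneg hM (hy a)
    rw [e]
    calc _ ≤ |u a| * |∏ l ∈ G, u l - ∏ l ∈ G, v l| + |u a - v a| * |∏ l ∈ G, v l| := by
          rw [← abs_mul, ← abs_mul]; exact abs_add_le _ _
      _ ≤ (M * y a) * (G.card * ε * ∏ l ∈ G, (M * y l))
          + (ε * (M * y a)) * ∏ l ∈ G, (M * y l) := by
          gcongr
          · exact hu a
          · exact huv a
      _ = _ := by push_cast; ring

lemma prod_one_sub_expand {n : ℕ} (φ : Fin n → ℝ) :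
    ∏ l, φ l = ∑ G : Finset (Fin n), (-1) ^ G.card * ∏ l ∈ G, (1 - φ l) := by
  have : ∏ l, φ l = ∏ l, ((-(1 - φ l)) + 1) := Finset.prod_congr rfl fun l _ => by ring
  rw [this, Finset.prod_add_one, Finset.powerset_univ]
  exact Finset.sum_congr rfl fun G _ => by rw [Finset.prod_neg]

/-- elementary symmetric sum -/
def ek {n : ℕ} (k : ℕ) (y : Fin n → ℝ) : ℝ :=
  ∑ F ∈ Finset.powersetCard k (Finset.univ : Finset (Fin n)), ∏ l ∈ F, y l

lemma prod_le_ek {n k : ℕ} (y : Fin n → ℝ) (h0 : ∀ l, 0 ≤ y l) (h1 : ∀ l, y l ≤ 1)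
    (G : Finset (Fin n)) (hG : k ≤ G.card) : ∏ l ∈ G, y l ≤ ek k y := by
  obtain ⟨F, hF, hFk⟩ := Finset.exists_subset_card_eq hG
  calc ∏ l ∈ G, y l ≤ ∏ l ∈ F, y l :=
        Finset.prod_le_prod_of_subset_of_le_one hF (fun l _ => h0 l) fun l _ _ => h1 l
    _ ≤ ek k y := by
      refine Finset.single_le_sum (f := fun F => ∏ l ∈ F, y l)
        (fun F _ => Finset.prod_nonneg fun l _ => h0 l) ?_
      exact Finset.mem_powersetCard.2 ⟨Finset.subset_univ _, hFk⟩

lemma coef_close {n k : ℕ} {T : Type*} [Fintype T] (d : T → ℝ) (J : T → Fin n → ℕ)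
    (hB : ∀ G : Finset (Fin n), G.card < k → ∀ φ : Fin n → ℕ → ℝ,
      ∑ s, d s * ∏ l ∈ G, φ l (J s l) = 0)
    (φ ψ : Fin n → ℕ → ℝ) (y : Fin n → ℝ) (M ε : ℝ) (hM : 1 ≤ M) (hε : 0 ≤ ε)
    (h0 : ∀ l, 0 ≤ y l) (h1 : ∀ l, y l ≤ 1)
    (hu : ∀ s l, |1 - φ l (J s l)| ≤ M * y l) (hv : ∀ s l, |1 - ψ l (J s l)| ≤ M * y l)
    (huv : ∀ s l, |φ l (J s l) - ψ l (J s l)| ≤ ε * (M * y l)) :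
    |∑ s, d s * ∏ l, φ l (J s l) - ∑ s, d s * ∏ l, ψ l (J s l)|
      ≤ (2 ^ n * ((∑ s, |d s|) * (n * M ^ n))) * ε * ek k y := by
  have hex : ∀ φ : Fin n → ℕ → ℝ, ∑ s, d s * ∏ l, φ l (J s l)
      = ∑ G : Finset (Fin n), (-1) ^ G.card * ∑ s, d s * ∏ l ∈ G, (1 - φ l (J s l)) := by
    intro φ
    simp_rw [prod_one_sub_expand (fun l => φ l (J _ l)), Finset.mul_sum]
    rw [Finset.sum_comm]
    exact Finset.sum_congr rfl fun G _ => Finset.sum_congr rfl fun s _ => by ring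
  have hek : 0 ≤ ek k y := Finset.sum_nonneg fun F _ => Finset.prod_nonneg fun l _ => h0 l
  have hD : 0 ≤ ∑ s, |d s| := Finset.sum_nonneg fun s _ => abs_nonneg _
  rw [hex, hex, ← Finset.sum_sub_distrib]
  have hG : ∀ G : Finset (Fin n),
      |(-1) ^ G.card * ∑ s, d s * ∏ l ∈ G, (1 - φ l (J s l))
        - (-1) ^ G.card * ∑ s, d s * ∏ l ∈ G, (1 - ψ l (J s l))|
      ≤ ((∑ s, |d s|) * (n * M ^ n)) * ε * ek k y := by
    intro G
    rcases lt_or_ge G.card k with hlt | hge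
    · rw [hB G hlt (fun l j => 1 - φ l j), hB G hlt (fun l j => 1 - ψ l j)]
      simp only [mul_zero, sub_zero, abs_zero]
      positivity
    · rw [← mul_sub, abs_mul, abs_pow, abs_neg, abs_one, one_pow, one_mul,
        ← Finset.sum_sub_distrib]
      refine (Finset.abs_sum_le_sum_abs _ _).trans ?_
      rw [mul_assoc, mul_assoc, Finset.sum_mul]
      refine Finset.sum_le_sum fun s _ => ?_
      rw [← mul_sub, abs_mul]
      refine mul_le_mul_of_nonneg_left ?_ (abs_nonneg _)
      refine (prod_close G _ _ y M ε (by linarith) hε h0 (hu s) (hv s) fun l => ?_).trans ?_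
      · have := huv s l
        rw [abs_sub_comm] at this
        convert this using 2
        ring
      · rw [Finset.prod_mul_distrib, Finset.prod_const]
        have hc : G.card ≤ n := by simpa using Finset.card_le_univ G
        have hc' : (G.card : ℝ) ≤ n := by exact_mod_cast hc
        have hp : M ^ G.card ≤ M ^ n := pow_le_pow_right₀ hM hc
        have hq := prod_le_ek y h0 h1 G hge
        have hq0 : 0 ≤ ∏ l ∈ G, y l := Finset.prod_nonneg fun l _ => h0 l
        calc G.card * ε * (M ^ G.card * ∏ l ∈ G, y l) ≤ n * ε * (M ^ n * ek k y) := by gcongr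
          _ = _ := by ring
  refine (Finset.abs_sum_le_sum_abs _ _).trans ?_
  refine (Finset.sum_le_sum fun G _ => hG G).trans ?_
  rw [Finset.sum_const, Finset.card_univ, Fintype.card_finset, Fintype.card_fin, nsmul_eq_mul]
  push_cast
  exact le_of_eq (by ring)

lemma bern_main {n k : ℕ} {T : Type*} [Fintype T] (d : T → ℝ) (J : T → Fin n → ℕ)
    (hA : ∀ x : Fin n → ℝ, (∀ l, 0 ≤ x l) → (∀ l, x l ≤ 1) → 0 ≤ ∑ s, d s * ∏ l, x l ^ J s l)
    (hB : ∀ G : Finset (Fin n), G.card < k → ∀ φ : Fin n → ℕ → ℝ,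
      ∑ s, d s * ∏ l ∈ G, φ l (J s l) = 0)
    (L : MvPolynomial (Fin n) ℝ →ₗ[ℝ] ℝ)
    (hL : ∀ (α : Fin n → ℕ) (p : Fin n →₀ ℕ), k ≤ (univ.filter fun i => α i ≠ 0).card →
      0 ≤ L (MvPolynomial.monomial p 1 * ∏ i, (1 - MvPolynomial.X i) ^ α i)) :
    0 ≤ ∑ s, d s * L (∏ l, MvPolynomial.X l ^ J s l) := by
  obtain ⟨K, hK⟩ : ∃ K : ℕ, ∀ s l, J s l ≤ K := by
    refine ⟨∑ s, ∑ l, J s l, fun s l => ?_⟩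
    exact (Finset.single_le_sum (f := fun l => J s l) (fun _ _ => Nat.zero_le _)
      (Finset.mem_univ l)).trans (Finset.single_le_sum (f := fun s => ∑ l, J s l)
      (fun _ _ => Nat.zero_le _) (Finset.mem_univ s))
  set M : ℝ := 2 * K * K + K + 1 with hM
  have hM1 : 1 ≤ M := by
    have : (0 : ℝ) ≤ 2 * K * K + K := by positivity
    linarith
  set C : ℝ := 2 ^ n * ((∑ s, |d s|) * (n * M ^ n)) with hC
  set E : MvPolynomial (Fin n) ℝ :=
    ∑ F ∈ Finset.powersetCard k (Finset.univ : Finset (Fin n)),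
      ∏ l, (if l ∈ F then 1 - MvPolynomial.X l else 1) with hE
  have key : ∀ N : ℕ, 0 < N → 2 * K ≤ N →
      0 ≤ ∑ s, d s * L (∏ l, MvPolynomial.X l ^ J s l) + C * (1 / N) * L E := by
    intro N hN hKN
    have hN' : (0 : ℝ) < N := by exact_mod_cast hN
    have hN1 : (1 : ℝ) ≤ N := by exact_mod_cast hN
    set B : (Fin n → Fin (N + 1)) → MvPolynomial (Fin n) ℝ :=
      fun i => ∏ l, bb N (i l) (MvPolynomial.X l) with hBdef
    have e1 : ∀ s, L (∏ l, MvPolynomial.X l ^ J s l)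
        = ∑ i : Fin n → Fin (N + 1), (∏ l, ww N (J s l) (i l)) * L (B i) := by
      intro s
      rw [bernprod (N := N) _ (fun l i => ww N (J s l) i) fun l =>
        bern1 (by have := hK s l; omega) _, map_sum]
      simp [hBdef]
    have e2 : L E = ∑ i : Fin n → Fin (N + 1), ek k (fun l => 1 - (i l : ℝ) / N) * L (B i) := by
      rw [hE, map_sum]
      simp_rw [ek, Finset.sum_mul]
      rw [Finset.sum_comm]
      refine Finset.sum_congr rfl fun F _ => ?_
      rw [bernprod (N := N) _ (fun l i => if l ∈ F then 1 - (i : ℝ) / N else 1), map_sum]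
      · refine Finset.sum_congr rfl fun i _ => ?_
        rw [map_smul, smul_eq_mul, Finset.prod_ite_mem, Finset.univ_inter]
      · intro l
        have h0 := bern1 (Nat.zero_le N) (MvPolynomial.X l : MvPolynomial (Fin n) ℝ)
        have h1 := bern1 (show 1 ≤ N from hN) (MvPolynomial.X l : MvPolynomial (Fin n) ℝ)
        simp only [ww_zero, pow_zero] at h0
        simp only [ww_one, pow_one] at h1
        split_ifs
        · refine (congrArg₂ (fun a b => a - b) h0 h1).trans ?_
          rw [← Finset.sum_sub_distrib]
          exact Finset.sum_congr rfl fun i _ => by rw [← sub_mul, ← map_sub]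
        · exact h0
    have e3 : ∑ s, d s * L (∏ l, MvPolynomial.X l ^ J s l)
        = ∑ i : Fin n → Fin (N + 1), (∑ s, d s * ∏ l, ww N (J s l) (i l)) * L (B i) := by
      simp_rw [e1, Finset.mul_sum, Finset.sum_mul]
      rw [Finset.sum_comm]
      exact Finset.sum_congr rfl fun i _ => Finset.sum_congr rfl fun s _ => by ring
    rw [e3, e2, Finset.mul_sum, ← Finset.sum_add_distrib]
    refine Finset.sum_nonneg fun i _ => ?_
    have hiN : ∀ l, (i l : ℕ) ≤ N := fun l => by have := (i l).2; omega
    have hiN' : ∀ l, ((i l : ℕ) : ℝ) ≤ N := fun l => by exact_mod_cast hiN l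
    have hx0 : ∀ l, 0 ≤ ((i l : ℕ) : ℝ) / N := fun l => by positivity
    have hx1 : ∀ l, ((i l : ℕ) : ℝ) / N ≤ 1 := fun l => (div_le_one hN').2 (hiN' l)
    rcases lt_or_ge (univ.filter fun l => N - (i l : ℕ) ≠ 0).card k with hlt | hge
    · have z1 : ∑ s, d s * ∏ l, ww N (J s l) (i l) = 0 := by
        rw [← hB _ hlt (fun l j => ww N j (i l))]
        refine Finset.sum_congr rfl fun s _ => ?_
        congr 1
        symm
        refine Finset.prod_subset (Finset.subset_univ _) fun l _ hl => ?_
        have : (i l : ℕ) = N := by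
          have := hiN l
          simp at hl; omega
        rw [this]
        exact ww_self (by have := hK s l; omega)
      have z2 : ek k (fun l => 1 - ((i l : ℕ) : ℝ) / N) = 0 := by
        refine Finset.sum_eq_zero fun F hF => ?_
        have hFk := (Finset.mem_powersetCard.1 hF).2
        have : ¬ F ⊆ univ.filter fun l => N - (i l : ℕ) ≠ 0 := fun h => by
          have := Finset.card_le_card h; omega
        obtain ⟨l, hl, hl2⟩ := Finset.not_subset.1 this
        refine Finset.prod_eq_zero hl ?_
        have : (i l : ℕ) = N := by
          have := hiN l
          simp at hl2; omega
        rw [this, div_self hN'.ne', sub_self]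
      rw [z1, z2]; simp
    · have hBn : 0 ≤ L (B i) := by
        have := hL (fun l => N - (i l : ℕ)) (Finsupp.equivFunOnFinite.symm fun l => (i l : ℕ)) hge
        have eB : B i = (∏ l, (N.choose (i l) : ℝ)) •
            (MvPolynomial.monomial (Finsupp.equivFunOnFinite.symm fun l => (i l : ℕ)) 1 *
              ∏ l, (1 - MvPolynomial.X l) ^ (N - (i l : ℕ))) := by
          simp only [hBdef, bb]
          rw [Finset.prod_mul_distrib, Finset.prod_mul_distrib, MvPolynomial.smul_eq_C_mul,
            map_prod, MvPolynomial.monomial_eq, Finsupp.prod_fintype _ _ (by simp)]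
          simp
        rw [eB, map_smul]
        exact mul_nonneg (by positivity) this
      have hcl := coef_close d J hB (fun l j => ww N j (i l)) (fun l j => (((i l : ℕ) : ℝ) / N) ^ j)
        (fun l => 1 - ((i l : ℕ) : ℝ) / N) M (1 / N) hM1 (by positivity)
        (fun l => by linarith [hx1 l]) (fun l => by linarith [hx0 l])
      have hy : ∀ l, 0 ≤ 1 - ((i l : ℕ) : ℝ) / N := fun l => by linarith [hx1 l]
      have hv : ∀ s l, |1 - (((i l : ℕ) : ℝ) / N) ^ J s l| ≤ K * (1 - ((i l : ℕ) : ℝ) / N) := by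
        intro s l
        rw [abs_of_nonneg (by linarith [pow_le_one₀ (n := J s l) (hx0 l) (hx1 l)])]
        have hb := one_add_mul_sub_le_pow (show -1 ≤ ((i l : ℕ) : ℝ) / N by linarith [hx0 l]) (J s l)
        have : (J s l : ℝ) * (1 - ((i l : ℕ) : ℝ) / N) ≤ K * (1 - ((i l : ℕ) : ℝ) / N) := by
          have : (J s l : ℝ) ≤ K := by exact_mod_cast hK s l
          exact mul_le_mul_of_nonneg_right this (hy l)
        linarith
      have hw : ∀ s l, |ww N (J s l) (i l) - (((i l : ℕ) : ℝ) / N) ^ J s l|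
          ≤ 2 * K * K / N * (1 - ((i l : ℕ) : ℝ) / N) := by
        intro s l
        refine (ww_close (hiN l) hN hKN _ (hK s l)).trans ?_
        have : (J s l : ℝ) ≤ K := by exact_mod_cast hK s l
        have := hy l
        gcongr
      have h3 := hcl (fun s l => ?_) (fun s l => ?_) (fun s l => ?_)
      · have hP := hA _ hx0 hx1
        have h4 := (abs_le.1 h3).1
        rw [← mul_assoc, ← add_mul]
        refine mul_nonneg ?_ hBn
        linarith
      · have h5 : |1 - ww N (J s l) (i l)| ≤ |1 - (((i l : ℕ) : ℝ) / N) ^ J s l| +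
            |ww N (J s l) (i l) - (((i l : ℕ) : ℝ) / N) ^ J s l| := by
          have e : 1 - ww N (J s l) (i l) = (1 - (((i l : ℕ) : ℝ) / N) ^ J s l) -
            (ww N (J s l) (i l) - (((i l : ℕ) : ℝ) / N) ^ J s l) := by ring
          rw [e]; exact abs_sub _ _
        refine h5.trans ((add_le_add (hv s l) (hw s l)).trans ?_)
        rw [← add_mul]
        refine mul_le_mul_of_nonneg_right ?_ (hy l)
        have : (2 * K * K / N : ℝ) ≤ 2 * K * K := div_le_self (by positivity) hN1
        linarith
      · refine (hv s l).trans (mul_le_mul_of_nonneg_right ?_ (hy l))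
        have : (0 : ℝ) ≤ 2 * K * K := by positivity
        linarith
      · refine (hw s l).trans ?_
        rw [← mul_assoc]
        refine mul_le_mul_of_nonneg_right ?_ (hy l)
        rw [div_mul_eq_mul_div, one_mul]
        have : (0 : ℝ) ≤ K := by positivity
        gcongr
        linarith
  have hlim : Filter.Tendsto (fun N : ℕ => ∑ s, d s * L (∏ l, MvPolynomial.X l ^ J s l)
      + C * (1 / (N : ℝ)) * L E) Filter.atTop
      (nhds (∑ s, d s * L (∏ l, MvPolynomial.X l ^ J s l) + C * 0 * L E)) :=
    ((tendsto_one_div_atTop_nhds_zero_nat.const_mul C).mul_const _).const_add _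
  rw [mul_zero, zero_mul, add_zero] at hlim
  refine ge_of_tendsto hlim ?_
  filter_upwards [Filter.eventually_gt_atTop 0, Filter.eventually_ge_atTop (2 * K)] with N h1 h2
  exact key N h1 h2

lemma psd_iff {ι : Type*} [Fintype ι] (K : ι → ι → ℝ) (hs : ∀ a b, K a b = K b a) :
    (Matrix.of K).PosSemidef ↔ ∀ c : ι → ℝ, 0 ≤ ∑ a, ∑ b, c a * c b * K a b := by
  rw [Matrix.posSemidef_iff_dotProduct_mulVec]
  have hH : (Matrix.of K).IsHermitian := by
    ext a b; simp [hs a b]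
  have e : ∀ c : ι → ℝ, star c ⬝ᵥ (Matrix.of K).mulVec c = ∑ a, ∑ b, c a * c b * K a b := by
    intro c
    simp only [dotProduct, Matrix.mulVec, Finset.mul_sum]
    exact Finset.sum_congr rfl fun a _ => Finset.sum_congr rfl fun b _ => by simp; ring
  simp only [hH, true_and, e]

open scoped Matrix in
lemma psd_mul {ι : Type*} [Fintype ι] {K L : ι → ι → ℝ} (hK : (Matrix.of K).PosSemidef)
    (hL : (Matrix.of L).PosSemidef) : (Matrix.of fun a b => K a b * L a b).PosSemidef :=
  hK.hadamard hL

lemma psd_one {ι : Type*} [Fintype ι] : (Matrix.of fun _ _ : ι => (1 : ℝ)).PosSemidef := by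
  rw [psd_iff _ (fun _ _ => rfl)]
  intro c
  have : ∑ a, ∑ b, c a * c b * (1 : ℝ) = (∑ a, c a) * ∑ b, c b := by
    simp [Finset.sum_mul_sum]
  rw [this]; exact mul_self_nonneg _

lemma psd_pow {ι : Type*} [Fintype ι] {K : ι → ι → ℝ} (hK : (Matrix.of K).PosSemidef) (p : ℕ) :
    (Matrix.of fun a b => K a b ^ p).PosSemidef := by
  induction p with
  | zero => simpa using psd_one
  | succ p ih => simp only [pow_succ]; exact psd_mul ih hK

lemma psd_exp {ι : Type*} [Fintype ι] {K : ι → ι → ℝ} (hs : ∀ a b, K a b = K b a)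
    (hK : (Matrix.of K).PosSemidef) (c : ι → ℝ) :
    0 ≤ ∑ a, ∑ b, c a * c b * Real.exp (K a b) := by
  have hlim : HasSum (fun p : ℕ => ∑ a, ∑ b, c a * c b * (K a b ^ p / p.factorial))
      (∑ a, ∑ b, c a * c b * Real.exp (K a b)) := by
    refine hasSum_sum fun a _ => hasSum_sum fun b _ => HasSum.mul_left _ ?_
    rw [Real.exp_eq_exp_ℝ]
    exact NormedSpace.expSeries_div_hasSum_exp (K a b)
  refine hlim.nonneg fun p => ?_
  have := (psd_iff (fun a b => K a b ^ p) (fun a b => by rw [hs])).1 (psd_pow hK p) c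
  have e : ∑ a, ∑ b, c a * c b * (K a b ^ p / p.factorial)
      = (∑ a, ∑ b, c a * c b * K a b ^ p) / p.factorial := by
    simp_rw [Finset.sum_div]
    exact Finset.sum_congr rfl fun a _ => Finset.sum_congr rfl fun b _ => by ring
  rw [e]; positivity

lemma schoenberg {ι : Type*} [Fintype ι] (J : ι → ι → ℕ) (hs : ∀ a b, J a b = J b a)
    (h1 : ∀ a b, 1 ≤ J a b)
    (hc : ∀ c : ι → ℝ, ∑ a, c a = 0 → ∑ a, ∑ b, c a * c b * (J a b : ℝ) ≤ 0)
    (x : ℝ) (hx : 0 ≤ x) (hx1 : x ≤ 1) : (Matrix.of fun a b => x ^ J a b).PosSemidef := by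
  classical
  rw [psd_iff _ (fun a b => by rw [hs])]
  intro c
  rcases hx.eq_or_lt with rfl | hx0
  · refine le_of_eq (Eq.symm ?_)
    refine Finset.sum_eq_zero fun a _ => Finset.sum_eq_zero fun b _ => ?_
    rw [zero_pow (by have := h1 a b; omega), mul_zero]
  rcases isEmpty_or_nonempty ι with hι | ⟨⟨z⟩⟩
  · simp
  set r : ℝ := - Real.log x with hr
  have hr0 : 0 ≤ r := by have := Real.log_nonpos hx hx1; linarith
  set u : ι → ℝ := fun a => (J a z : ℝ) - (J z z : ℝ) / 2 with hu
  set ψ : ι → ι → ℝ := fun a b => u a + u b - J a b with hψ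
  have hψs : ∀ a b, ψ a b = ψ b a := fun a b => by simp only [hψ, hs a b]; ring
  have hψp : (Matrix.of ψ).PosSemidef := by
    rw [psd_iff _ hψs]
    intro c
    set S := ∑ a, c a with hS
    have h0 := hc (fun a => c a - if a = z then S else 0) (by simp [hS])
    have e1 : ∑ a, ∑ b, (c a - if a = z then S else 0) * (c b - if b = z then S else 0) *
        (J a b : ℝ) = ∑ a, ∑ b, c a * c b * (J a b : ℝ) - 2 * S * (∑ a, c a * (J a z : ℝ))
          + S * S * (J z z : ℝ) := by
      have : ∀ a, ∑ b, (c a - if a = z then S else 0) * (c b - if b = z then S else 0) *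
        (J a b : ℝ) = ∑ b, c a * c b * (J a b : ℝ) - S * (c a * (J a z : ℝ))
          - (if a = z then S * (∑ b, c b * (J z b : ℝ)) - S * S * J z z else 0) := by
        intro a
        have : ∀ b, (c a - if a = z then S else 0) * (c b - if b = z then S else 0) *
          (J a b : ℝ) = c a * c b * (J a b : ℝ) - (if b = z then S * (c a * (J a b : ℝ)) else 0)
          - (if a = z then S * (c b * (J a b : ℝ)) else 0) +
            (if b = z then (if a = z then S * S * (J a b : ℝ) else 0) else 0) := by
          intro b; split_ifs <;> ring
        simp_rw [this]
        rw [Finset.sum_add_distrib, Finset.sum_sub_distrib, Finset.sum_sub_distrib]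
        by_cases ha : a = z
        · subst ha; simp [Finset.mul_sum]; ring
        · simp [ha]
      simp_rw [this]
      rw [Finset.sum_sub_distrib, Finset.sum_sub_distrib]
      simp only [Finset.sum_ite_eq', Finset.mem_univ, if_true, ← Finset.mul_sum]
      have : ∑ b, c b * (J z b : ℝ) = ∑ b, c b * (J b z : ℝ) :=
        Finset.sum_congr rfl fun b _ => by rw [hs]
      rw [this]; ring
    have e2 : ∑ a, ∑ b, c a * c b * ψ a b = 2 * S * (∑ a, c a * (J a z : ℝ))
          - S * S * (J z z : ℝ) - ∑ a, ∑ b, c a * c b * (J a b : ℝ) := by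
      have : ∀ a, ∑ b, c a * c b * ψ a b = (c a * u a) * S + c a * (∑ b, c b * u b)
          - ∑ b, c a * c b * (J a b : ℝ) := by
        intro a
        rw [hS, Finset.mul_sum, Finset.mul_sum, ← Finset.sum_add_distrib, ← Finset.sum_sub_distrib]
        exact Finset.sum_congr rfl fun b _ => by simp only [hψ]; ring
      simp_rw [this]
      rw [Finset.sum_sub_distrib, Finset.sum_add_distrib, ← Finset.sum_mul, ← Finset.sum_mul, ← hS]
      have : ∑ b, c b * u b = ∑ b, c b * (J b z : ℝ) - S * ((J z z : ℝ) / 2) := by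
        rw [hS, Finset.sum_mul, ← Finset.sum_sub_distrib]
        exact Finset.sum_congr rfl fun b _ => by simp only [hu]; ring
      rw [this]; ring
    rw [e1] at h0
    rw [e2]; linarith
  have hrψ : (Matrix.of fun a b => r * ψ a b).PosSemidef := hψp.smul hr0
  have := psd_exp (K := fun a b => r * ψ a b) (fun a b => by rw [hψs]) hrψ
    (fun a => c a * Real.exp (-(r * u a)))
  refine this.trans (le_of_eq (Finset.sum_congr rfl fun a _ => Finset.sum_congr rfl fun b _ => ?_))
  have e : x ^ J a b = Real.exp (-(r * u a)) * Real.exp (-(r * u b)) * Real.exp (r * ψ a b) := by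
    rw [← Real.exp_add, ← Real.exp_add]
    have : x ^ J a b = Real.exp (Real.log x * J a b) := by
      rw [mul_comm, Real.exp_nat_mul, Real.exp_log hx0]
    rw [this]
    congr 1
    simp only [hψ, hr]; ring
  rw [e]; ring

lemma psd_prod {n m : ℕ} (K : Fin n → Fin m → Fin m → ℝ)
    (hK : ∀ l, (Matrix.of (K l)).PosSemidef) (s : Finset (Fin n)) :
    (Matrix.of fun α β : Fin n → Fin m => ∏ l ∈ s, K l (α l) (β l)).PosSemidef := by
  induction s using Finset.induction_on with
  | empty => simpa using psd_one
  | insert a s ha ih =>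
    simp only [Finset.prod_insert ha]
    exact psd_mul ((hK a).submatrix fun α : Fin n → Fin m => α a) ih

lemma marg {n m k : ℕ} (hk : k ≤ n) (c : (Fin n → Fin m) → ℝ) (hc : MemM k c)
    (G : Finset (Fin n)) (hG : G.card < k) (θ : (Fin n → Fin m) → ℝ)
    (hθ : ∀ α β, (∀ l ∈ G, α l = β l) → θ α = θ β) : ∑ α, c α * θ α = 0 := by
  have hcard : n - k + 1 ≤ Gᶜ.card := by
    rw [Finset.card_compl, Fintype.card_fin]; omega
  obtain ⟨F, hF, hFc⟩ := Finset.exists_subset_card_eq hcard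
  rcases isEmpty_or_nonempty (Fin n → Fin m) with he | ⟨⟨β0⟩⟩
  · simp
  rw [← (Equiv.piEquivPiSubtypeProd (fun i => i ∈ F) (fun _ => Fin m)).symm.sum_comp,
    Fintype.sum_prod_type, Finset.sum_comm]
  refine Finset.sum_eq_zero fun τ _ => ?_
  set β : Fin n → Fin m := fun i => if h : i ∈ F then β0 i else τ ⟨i, h⟩ with hβ
  have h0 := hc F (by simpa using hFc) β
  have : ∀ σ : {i // i ∈ F} → Fin m,
      (Equiv.piEquivPiSubtypeProd (fun i => i ∈ F) (fun _ => Fin m)).symm (σ, τ)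
        = fun i => if h : i ∈ F then σ ⟨i, h⟩ else β i := by
    intro σ
    ext i
    by_cases h : i ∈ F <;> simp [Equiv.piEquivPiSubtypeProd, hβ, h]
  simp_rw [this]
  have h2 : ∀ σ : {i // i ∈ F} → Fin m,
      θ (fun i => if h : i ∈ F then σ ⟨i, h⟩ else β i) = θ β := by
    intro σ
    refine hθ _ _ fun l hl => ?_
    have : l ∉ F := fun h => by have := hF h; simp at this; exact this hl
    simp [this]
  simp_rw [h2]
  rw [← Finset.sum_mul, h0, zero_mul]

/-- integer rounding of a kernel -/
def rnd (Q m : ℕ) (γ : Fin m → Fin m → ℝ) (a b : Fin m) : ℕ :=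
  ⌊γ a b * Q⌋₊ + 1 + if a = b then 0 else m

lemma rnd_symm (Q m : ℕ) (γ : Fin m → Fin m → ℝ) (h : ∀ a b, γ a b = γ b a) (a b : Fin m) :
    rnd Q m γ a b = rnd Q m γ b a := by
  simp [rnd, h a b, eq_comm]

lemma rnd_pos (Q m : ℕ) (γ : Fin m → Fin m → ℝ) (a b : Fin m) : 1 ≤ rnd Q m γ a b := by
  unfold rnd; omega

lemma rnd_cnd (Q m : ℕ) (γ : Fin m → Fin m → ℝ) (h0 : ∀ a b, 0 ≤ γ a b)
    (hc : ∀ c : Fin m → ℝ, ∑ a, c a = 0 → ∑ a, ∑ b, c a * c b * γ a b ≤ 0) :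
    ∀ c : Fin m → ℝ, ∑ a, c a = 0 → ∑ a, ∑ b, c a * c b * (rnd Q m γ a b : ℝ) ≤ 0 := by
  intro c hS
  have h1 : ∀ a b, c a * c b * (rnd Q m γ a b : ℝ) ≤ Q * (c a * c b * γ a b) + |c a| * |c b|
      + (1 + m) * (c a * c b) - (if a = b then m * (c a * c b) else 0) := by
    intro a b
    have hp : 0 ≤ γ a b * Q := mul_nonneg (h0 a b) (Nat.cast_nonneg _)
    have f1 := Nat.floor_le hp
    have f2 := Nat.lt_floor_add_one (γ a b * Q)
    have hb : c a * c b * ((⌊γ a b * Q⌋₊ : ℝ) - γ a b * Q) ≤ |c a| * |c b| := by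
      refine (le_abs_self _).trans ?_
      rw [abs_mul, abs_mul]
      refine mul_le_of_le_one_right (by positivity) ?_
      rw [abs_le]; constructor <;> linarith
    unfold rnd
    push_cast
    split_ifs <;> nlinarith
  have h2 : ∑ a, ∑ b, c a * c b * (rnd Q m γ a b : ℝ) ≤ ∑ a, ∑ b, (Q * (c a * c b * γ a b)
      + |c a| * |c b| + (1 + m) * (c a * c b) - (if a = b then m * (c a * c b) else 0)) :=
    Finset.sum_le_sum fun a _ => Finset.sum_le_sum fun b _ => h1 a b
  refine h2.trans ?_
  simp only [Finset.sum_sub_distrib, Finset.sum_add_distrib, ← Finset.mul_sum, ← Finset.sum_mul,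
    hS, Finset.sum_ite_eq, Finset.mem_univ, if_true]
  have h3 := sq_sum_le_card_mul_sum_sq (s := (Finset.univ : Finset (Fin m))) (f := fun a => |c a|)
  simp only [sq_abs, Finset.card_univ, Fintype.card_fin] at h3
  have h4 : ∑ a, c a * c a = ∑ a, c a ^ 2 := Finset.sum_congr rfl fun a _ => by ring
  have h5 : (Q : ℝ) * ∑ a, ∑ b, c a * c b * γ a b ≤ 0 :=
    mul_nonpos_of_nonneg_of_nonpos (Nat.cast_nonneg _) (hc c hS)
  rw [h4]
  nlinarith

lemma rnd_tendsto (m : ℕ) (γ : Fin m → Fin m → ℝ) (h0 : ∀ a b, 0 ≤ γ a b) (a b : Fin m) :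
    Filter.Tendsto (fun Q : ℕ => ((rnd Q m γ a b : ℝ) + 1) * (1 / (Q : ℝ))) Filter.atTop
      (nhds (γ a b)) := by
  have h1 := (tendsto_nat_floor_mul_div_atTop (h0 a b)).comp
    (tendsto_natCast_atTop_atTop (R := ℝ))
  have h2 := (tendsto_one_div_atTop_nhds_zero_nat (𝕜 := ℝ)).const_mul
    ((2 : ℝ) + if a = b then 0 else (m : ℝ))
  have h3 := h1.add h2
  rw [mul_zero, add_zero] at h3
  refine h3.congr fun Q => ?_
  simp only [rnd, Function.comp]
  push_cast
  split_ifs <;> ring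

lemma discrete_case {n k m : ℕ} (hk : k ≤ n) {g : (Fin n → ℝ) → ℝ} (hg : BernsteinOrder k g)
    {h : ℝ} (hh : 0 < h) (J : Fin n → Fin m → Fin m → ℕ) (hs : ∀ l a b, J l a b = J l b a)
    (h1 : ∀ l a b, 1 ≤ J l a b)
    (hJ : ∀ l, ∀ c : Fin m → ℝ, ∑ a, c a = 0 → ∑ a, ∑ b, c a * c b * (J l a b : ℝ) ≤ 0)
    (c : (Fin n → Fin m) → ℝ) (hc : MemM k c) :
    0 ≤ (-1 : ℝ) ^ k * ∑ α : Fin n → Fin m, ∑ β : Fin n → Fin m,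
      c α * c β * g (fun l => ((J l (α l) (β l) : ℝ) + 1) * h) := by
  have := bern_main (n := n) (k := k) (T := (Fin n → Fin m) × (Fin n → Fin m))
    (fun s => c s.1 * c s.2) (fun s l => J l (s.1 l) (s.2 l)) ?_ ?_
    (((-1 : ℝ) ^ k) • ell h g) ?_
  · rw [Fintype.sum_prod_type] at this
    rw [Finset.mul_sum]
    refine this.trans (le_of_eq (Finset.sum_congr rfl fun α _ => ?_))
    rw [Finset.mul_sum]
    refine Finset.sum_congr rfl fun β _ => ?_
    have e : (∏ l, MvPolynomial.X l ^ J l (α l) (β l) : MvPolynomial (Fin n) ℝ)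
        = MvPolynomial.monomial (Finsupp.equivFunOnFinite.symm fun l => J l (α l) (β l)) 1 := by
      rw [MvPolynomial.monomial_eq, Finsupp.prod_fintype _ _ (by simp)]
      simp
    rw [LinearMap.smul_apply, e, ell_monomial]
    simp only [Finsupp.equivFunOnFinite_symm_apply_apply, smul_eq_mul]
    ring
  · intro x hx0 hx1
    have hp := psd_prod (fun l a b => x l ^ J l a b)
      (fun l => schoenberg (J l) (hs l) (h1 l) (hJ l) (x l) (hx0 l) (hx1 l)) Finset.univ
    rw [psd_iff _ (fun α β => Finset.prod_congr rfl fun l _ => by rw [hs])] at hp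
    rw [Fintype.sum_prod_type]
    exact hp c
  · intro G hG φ
    rw [Fintype.sum_prod_type, Finset.sum_comm]
    refine Finset.sum_eq_zero fun β _ => ?_
    have := marg hk c hc G hG (fun α => c β * ∏ l ∈ G, φ l (J l (α l) (β l)))
      (fun α α' H => by
        congr 1
        exact Finset.prod_congr rfl fun l hl => by rw [H l hl])
    rw [← this]
    exact Finset.sum_congr rfl fun α _ => by ring
  · intro α p hα
    exact ell_sign hh hg α p hα

theorem statement15 {n k : ℕ} (hk : k ≤ n) (X : Fin n → Type*)
    (γ : ∀ i, X i → X i → ℝ) (hγpos : ∀ i a b, 0 ≤ γ i a b)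
    (hγ : ∀ i, IsCND (γ i))
    (g : (Fin n → ℝ) → ℝ)
    (hgc : ContinuousOn g {t : Fin n → ℝ | ∀ i, 0 ≤ t i})
    (hgz : ∀ t : Fin n → ℝ, (∀ i, 0 ≤ t i) →
      (∀ s : Finset (Fin n), (∀ i ∈ s, 0 < t i) → s.card < k) → g t = 0)
    (hgb : BernsteinOrder k g) :
    IsPDI k (fun x1 x2 : ∀ i, X i => g fun i => γ i (x1 i) (x2 i)) := by
  classical
  refine ⟨fun x1 x2 α => ?_, fun m x _ c hc => ?_⟩
  · simp only
    congr 1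
    ext i
    by_cases h : α i = true
    · simpa [sel, h] using (hγ i).1 _ _
    · simp [sel, h]
  · have hsymm : ∀ i a b, γ i a b = γ i b a := fun i => (hγ i).1
    let J : ℕ → Fin n → Fin m → Fin m → ℕ := fun Q l a b =>
      rnd Q m (fun a b => γ l (x l a) (x l b)) a b
    have step : ∀ Q : ℕ, 0 < Q → 0 ≤ (-1 : ℝ) ^ k * ∑ α : Fin n → Fin m, ∑ β : Fin n → Fin m,
        c α * c β * g (fun l => ((J Q l (α l) (β l) : ℝ) + 1) * (1 / (Q : ℝ))) := fun Q hQ =>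
      discrete_case hk hgb (by positivity) (J Q)
        (fun l a b => rnd_symm _ _ _ (fun a b => hsymm l _ _) a b)
        (fun l a b => rnd_pos _ _ _ a b)
        (fun l => rnd_cnd _ _ _ (fun a b => hγpos _ _ _) fun d hd => (hγ l).2 m (x l) d hd) c hc
    have hlim : Filter.Tendsto (fun Q : ℕ => (-1 : ℝ) ^ k * ∑ α : Fin n → Fin m,
        ∑ β : Fin n → Fin m,
        c α * c β * g (fun l => ((J Q l (α l) (β l) : ℝ) + 1) * (1 / (Q : ℝ)))) Filter.atTop
        (nhds ((-1 : ℝ) ^ k * dSum (fun x1 x2 : ∀ i, X i => g fun i => γ i (x1 i) (x2 i)) x c)) := by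
      refine Filter.Tendsto.const_mul _ ?_
      refine tendsto_finsetSum _ fun α _ => tendsto_finsetSum _ fun β _ => ?_
      refine Filter.Tendsto.const_mul _ ?_
      have hcont := hgc (fun i => γ i (gridPt x α i) (gridPt x β i)) (fun i => hγpos i _ _)
      refine hcont.tendsto.comp (tendsto_nhdsWithin_iff.2 ⟨?_, ?_⟩)
      · refine tendsto_pi_nhds.2 fun l => ?_
        exact rnd_tendsto m (fun a b => γ l (x l a) (x l b)) (fun a b => hγpos _ _ _) (α l) (β l)
      · exact Filter.Eventually.of_forall fun Q l => by positivity
    refine ge_of_tendsto hlim ?_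
    filter_upwards [Filter.eventually_gt_atTop 0] with Q hQ
    exact step Q hQ



end PDIPaper
end
end

section
/- Let n ≥ ℓ ≥ 0, let γ_i : X_i × X_i → [0,∞) (1 ≤ i ≤ n) be CND kernels, and let ψ : [0,∞) → ℝ be a continuous function that is completely monotone of order ℓ. Then the kernel 𝕴_ψ^γ(x_{1⃗}, x_{2⃗}) := (−1)^ℓ ψ( ∑_{i=1}^n γ_i(x_i^1, x_i^2) ) is PDI_ℓ on 𝕏_n; equivalently, ∫∫ ψ( ∑_{i=1}^n γ_i(x_i^1, x_i^2) ) dμ(x_{1⃗}) dμ(x_{2⃗}) ≥ 0 for every discrete measure μ ∈ ℳ_ℓ(𝕏_n). -/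
noncomputable section

open Finset

namespace PDIPaper

variable {ι : Type*} [Fintype ι] [DecidableEq ι] {X : ι → Type*}

/-- Taylor sums of a chain. -/
def tay (f : ℕ → ℝ → ℝ) (N : ℕ) (y x : ℝ) : ℝ :=
  ∑ k ∈ range N, f k y * (y - x) ^ k / (k.factorial : ℝ)

theorem tay_deriv (f : ℕ → ℝ → ℝ) (hf : ∀ k t, 0 < t → HasDerivAt (f k) (-(f (k+1) t)) t)
    (N : ℕ) (x y : ℝ) (hy : 0 < y) :
    HasDerivAt (fun y => tay f (N+1) y x) (-(f (N+1) y * (y - x) ^ N / (N.factorial : ℝ))) y := by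
  induction N with
  | zero =>
    have := hf 0 y hy
    simpa [tay] using this
  | succ N ih =>
    have h1 : HasDerivAt (fun y => f (N+1) y * (y - x) ^ (N+1) / ((N+1).factorial : ℝ))
        ((-(f (N+2) y) * (y - x)^(N+1) + f (N+1) y * (((N+1 : ℕ) : ℝ) * (y-x)^N * 1))
          / ((N+1).factorial : ℝ)) y := by
      apply HasDerivAt.div_const
      apply (hf (N+1) y hy).mul
      exact ((hasDerivAt_id y).sub_const x).pow (N+1)
    have h2 := ih.add h1
    have e : (fun y => tay f (N+1+1) y x) = (fun y => tay f (N+1) y x) +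
        (fun y => f (N+1) y * (y - x) ^ (N+1) / ((N+1).factorial : ℝ)) := by
      funext y; simp [tay, Finset.sum_range_succ]
    rw [e]
    refine h2.congr_deriv ?_
    have hN : (N.factorial : ℝ) ≠ 0 := by positivity
    rw [Nat.factorial_succ]; push_cast
    field_simp
    ring

theorem tay_self (f : ℕ → ℝ → ℝ) (N : ℕ) (x : ℝ) : tay f (N+1) x x = f 0 x := by
  simp [tay, Finset.sum_range_succ']

/-- Cauchy remainder, both directions -/
theorem tay_mvt (f : ℕ → ℝ → ℝ) (hf : ∀ k t, 0 < t → HasDerivAt (f k) (-(f (k+1) t)) t)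
    (N : ℕ) (x a b : ℝ) (ha : 0 < a) (hab : a < b) :
    ∃ y ∈ Set.Ioo a b, tay f (N+1) b x - tay f (N+1) a x =
      -(f (N+1) y * (y - x) ^ N / (N.factorial : ℝ)) * (b - a) := by
  obtain ⟨y, hy, h⟩ := exists_hasDerivAt_eq_slope (fun y => tay f (N+1) y x)
    (fun y => -(f (N+1) y * (y - x) ^ N / (N.factorial : ℝ))) hab
    (fun y hy => (tay_deriv f hf N x y (ha.trans_le hy.1)).continuousAt.continuousWithinAt)
    (fun y hy => tay_deriv f hf N x y (ha.trans hy.1))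
  refine ⟨y, hy, ?_⟩
  rw [h]; field_simp [sub_ne_zero.mpr hab.ne']

theorem tay_le (f : ℕ → ℝ → ℝ) (hf : ∀ k t, 0 < t → HasDerivAt (f k) (-(f (k+1) t)) t)
    (hp : ∀ k t, 0 < t → 0 ≤ f k t) (N : ℕ) (x a : ℝ) (hx : 0 < x) (hxa : x ≤ a) :
    tay f (N+1) a x ≤ f 0 x := by
  rcases hxa.eq_or_lt with rfl | h
  · rw [tay_self]
  · obtain ⟨y, hy, e⟩ := tay_mvt f hf N x x a hx h
    rw [tay_self] at e
    have h1 := hp (N+1) y (hx.trans hy.1)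
    have h2 : 0 ≤ y - x := by linarith [hy.1]
    have h3 : 0 ≤ a - x := by linarith
    have : 0 ≤ (f (N+1) y * (y - x) ^ N / (N.factorial : ℝ)) * (a - x) := by positivity
    linarith

theorem term_le (f : ℕ → ℝ → ℝ) (hf : ∀ k t, 0 < t → HasDerivAt (f k) (-(f (k+1) t)) t)
    (hp : ∀ k t, 0 < t → 0 ≤ f k t) (N : ℕ) (x a : ℝ) (hx : 0 < x) (hxa : x ≤ a) :
    f N a * (a - x) ^ N / (N.factorial : ℝ) ≤ f 0 x := by
  refine le_trans ?_ (tay_le f hf hp N x a hx hxa)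
  unfold tay
  refine Finset.single_le_sum (f := fun k => f k a * (a - x) ^ k / (k.factorial : ℝ))
    (fun k _ => ?_) (by simp)
  have := hp k a (hx.trans_le hxa)
  have : 0 ≤ a - x := by linarith
  positivity

/-- remainder bound -/
theorem rem_bound (f : ℕ → ℝ → ℝ) (hf : ∀ k t, 0 < t → HasDerivAt (f k) (-(f (k+1) t)) t)
    (hp : ∀ k t, 0 < t → 0 ≤ f k t) (N : ℕ) (d x a : ℝ) (hd : 0 < d) (hx : 2 * d ≤ x) (hxa : x < a) :
    f 0 x - tay f (N+1) a x ≤ f 0 d * (a / d) * ((N+1 : ℝ) * (a / (a + d)) ^ N) := by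
  obtain ⟨y, hy, e⟩ := tay_mvt f hf N x x a (by linarith) hxa
  rw [tay_self] at e
  have hy1 := hy.1
  have hy2 := hy.2
  have h1 := term_le f hf hp (N+1) d y hd (by linarith)
  have hyd : 0 < y - d := by linarith
  have hf0 := hp (N+1) y (by linarith)
  have hfd := hp 0 d hd
  have hfac : (0:ℝ) < N.factorial := by positivity
  have q : (y - x) / (y - d) ≤ a / (a + d) := by
    rw [div_le_div_iff₀ hyd (by linarith)]
    nlinarith
  have q0 : 0 ≤ (y - x) / (y - d) := div_nonneg (by linarith) hyd.le
  have e2 : f 0 x - tay f (N+1) a x = (f (N+1) y * (y - d) ^ (N+1) / ((N+1).factorial : ℝ)) *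
      ((a - x) / (y - d)) * ((N+1 : ℝ) * ((y - x) / (y - d)) ^ N) := by
    have : f 0 x - tay f (N+1) a x = (f (N+1) y * (y - x) ^ N / (N.factorial : ℝ)) * (a - x) := by
      linarith
    rw [this, Nat.factorial_succ, div_pow]
    push_cast
    field_simp
    ring
  rw [e2]
  have : (a - x) / (y - d) ≤ a / d := by
    rw [div_le_div_iff₀ hyd hd]
    nlinarith
  have : 0 ≤ (a - x) / (y - d) := div_nonneg (by linarith) hyd.le
  have : 0 < a := by linarith
  gcongr

theorem exp_pow_bound (k : ℕ) (s : ℝ) (h0 : 0 ≤ s) (h1 : s ≤ 1) :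
    |(1 - s) ^ k - Real.exp (-((k+1 : ℝ) * s))| ≤ s := by
  have hE : Real.exp (-((k+1 : ℝ) * s)) = Real.exp (-s) ^ k * Real.exp (-s) := by
    rw [← pow_succ, ← Real.exp_nat_mul]; push_cast; ring_nf
  have hs := Real.add_one_le_exp (-s)
  have hpos := Real.exp_pos (-s)
  have hle1 : Real.exp (-s) ≤ 1 := Real.exp_le_one_iff.mpr (by linarith)
  rw [abs_le]; constructor
  · have b1 : 1 - (k:ℝ) * s^2 ≤ ((1 - s) * Real.exp s) ^ k := by
      have hb := one_add_mul_le_pow (a := -(s^2)) (by nlinarith) k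
      have : (1 + -(s^2)) ^ k ≤ ((1 - s) * Real.exp s) ^ k := by
        apply pow_le_pow_left₀ (by nlinarith)
        have := Real.add_one_le_exp s
        nlinarith
      linarith
    have b2 : (1 - s) ^ k = Real.exp (-s) ^ k * ((1 - s) * Real.exp s) ^ k := by
      rw [← mul_pow]; congr 1
      rw [mul_comm (1 - s), ← mul_assoc, ← Real.exp_add]; simp
    have b3 : Real.exp (-s) ^ k * (k * s) ≤ 1 := by
      rw [← Real.exp_nat_mul, mul_neg, Real.exp_neg, inv_mul_le_iff₀ (Real.exp_pos _)]
      have := Real.add_one_le_exp ((k:ℝ) * s)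
      linarith
    have b4 : 0 < Real.exp (-s) ^ k := by positivity
    have b5 : Real.exp (-s) ^ k * (1 - (k:ℝ) * s^2) ≤ (1-s)^k := by
      rw [b2]; gcongr
    have b6 : Real.exp (-s) ^ k * ((k:ℝ) * s^2) ≤ s := by
      have := mul_le_mul_of_nonneg_right b3 h0
      nlinarith
    rw [hE]
    have : Real.exp (-s) ^ k * Real.exp (-s) ≤ Real.exp (-s) ^ k := by nlinarith
    nlinarith
  · have a1 : (1 - s) ^ k ≤ Real.exp (-s) ^ k := pow_le_pow_left₀ (by linarith) (by linarith) k
    have a2 : Real.exp (-s) ^ k ≤ 1 := pow_le_one₀ hpos.le hle1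
    have a3 : 0 ≤ Real.exp (-s) ^ k := by positivity
    rw [hE]
    nlinarith

theorem approx (f : ℕ → ℝ → ℝ) (hf : ∀ k t, 0 < t → HasDerivAt (f k) (-(f (k+1) t)) t)
    (hp : ∀ k t, 0 < t → 0 ≤ f k t) (d T ε : ℝ) (hd : 0 < d) (hT : 0 < T) (hε : 0 < ε) :
    ∃ (N : ℕ) (q r : ℕ → ℝ), (∀ k, 0 ≤ q k) ∧ (∀ k, 0 < r k) ∧
      ∀ t, 2 * d ≤ t → t ≤ 2 * d + T →
        |f 0 t - ∑ k ∈ range N, q k * Real.exp (-(r k * t))| ≤ ε := by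
  have hM : 0 ≤ f 0 (2*d) := hp 0 _ (by linarith)
  obtain ⟨A, hA1, hA2⟩ : ∃ A, T + 1 ≤ A ∧ f 0 (2*d) * (T / A) ≤ ε / 2 := by
    refine ⟨T + 1 + f 0 (2*d) * T * (2 / ε), by have : 0 ≤ f 0 (2*d) * T * (2 / ε) := by positivity
                                                linarith, ?_⟩
    have : 0 ≤ f 0 (2*d) * T * (2 / ε) := by positivity
    rw [← mul_div_assoc, div_le_iff₀ (by linarith)]
    have : ε / 2 * (f 0 (2*d) * T * (2 / ε)) = f 0 (2*d) * T := by field_simp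
    nlinarith
  have hA : 0 < A := by linarith
  set a := A + 2 * d with ha
  have ha0 : 0 < a := by linarith
  obtain ⟨N, hN⟩ : ∃ N : ℕ, f 0 d * (a / d) * ((N+1 : ℝ) * (a / (a + d)) ^ N) ≤ ε / 2 := by
    have hq : ‖a / (a + d)‖ < 1 := by
      rw [Real.norm_of_nonneg (by positivity), div_lt_one (by linarith)]; linarith
    have t1 := tendsto_self_mul_const_pow_of_lt_one (r := a / (a+d)) (by positivity)
      (by rwa [Real.norm_of_nonneg (by positivity)] at hq)
    have t2 := tendsto_pow_atTop_nhds_zero_of_norm_lt_one hq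
    have t3 := ((t1.add t2).const_mul (f 0 d * (a / d)))
    simp only [add_zero, mul_zero] at t3
    have := t3.eventually (eventually_le_nhds (show (0:ℝ) < ε/2 by linarith))
    obtain ⟨N, hN⟩ := this.exists
    exact ⟨N, by refine le_of_eq_of_le ?_ hN; ring⟩
  have hq0 : ∀ k, 0 ≤ f k a * A ^ k / (k.factorial : ℝ) := fun k => by
    have := hp k a ha0
    positivity
  refine ⟨N+1, fun k => f k a * A ^ k / (k.factorial : ℝ) * Real.exp ((k+1 : ℝ) * (2 * d) / A),
    fun k => (k+1 : ℝ) / A, fun k => mul_nonneg (hq0 k) (Real.exp_pos _).le,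
    fun k => by positivity, fun t ht1 ht2 => ?_⟩
  have r1 := rem_bound f hf hp N d t a hd ht1 (by linarith)
  have r2 := tay_le f hf hp N t a (by linarith) (by linarith)
  set s := (t - 2*d) / A with hs
  have hs0 : 0 ≤ s := div_nonneg (by linarith) hA.le
  have hsT : s ≤ T / A := by rw [hs]; gcongr; linarith
  have hs1 : s ≤ 1 := hsT.trans (by rw [div_le_one hA]; linarith)
  have key : |tay f (N+1) a t - ∑ k ∈ range (N+1), f k a * A ^ k / (k.factorial : ℝ) *
      Real.exp ((k+1 : ℝ) * (2 * d) / A) * Real.exp (-((k+1 : ℝ) / A * t))| ≤ ε / 2 := by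
    unfold tay
    rw [← Finset.sum_sub_distrib]
    have hsum : ∑ k ∈ range (N+1), f k a * A ^ k / (k.factorial : ℝ) ≤ f 0 (2*d) := by
      have := tay_le f hf hp N (2*d) a (by linarith) (by linarith)
      simpa [tay, ha] using this
    calc _ ≤ ∑ k ∈ range (N+1), f k a * A ^ k / (k.factorial : ℝ) * s := by
          refine (Finset.abs_sum_le_sum_abs _ _).trans (Finset.sum_le_sum fun k _ => ?_)
          have e : f k a * (a - t) ^ k / (k.factorial : ℝ) - f k a * A ^ k / (k.factorial : ℝ) *
              Real.exp ((k+1 : ℝ) * (2 * d) / A) * Real.exp (-((k+1 : ℝ) / A * t)) =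
              f k a * A ^ k / (k.factorial : ℝ) * ((1 - s) ^ k - Real.exp (-((k+1 : ℝ) * s))) := by
            have e1 : a - t = A * (1 - s) := by rw [hs, ha]; field_simp; ring
            rw [e1, mul_pow, mul_assoc _ (Real.exp _), ← Real.exp_add]
            have e2 : (k+1 : ℝ) * (2 * d) / A + -((k+1 : ℝ) / A * t) = -((k+1 : ℝ) * s) := by
              rw [hs]; field_simp; ring
            rw [e2]; ring
          rw [e, abs_mul, abs_of_nonneg (hq0 k)]
          exact mul_le_mul_of_nonneg_left (exp_pow_bound k s hs0 hs1) (hq0 k)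
      _ = (∑ k ∈ range (N+1), f k a * A ^ k / (k.factorial : ℝ)) * s := by rw [Finset.sum_mul]
      _ ≤ f 0 (2*d) * (T / A) := by gcongr
      _ ≤ _ := hA2
  rw [abs_le] at key ⊢
  constructor <;> linarith [key.1, key.2]

/-- one-dimensional lemma, shifted -/
theorem one_dim {J : Type*} [Fintype J] (ℓ : ℕ) (c t : J → ℝ) (ht : ∀ j, 0 ≤ t j)
    (hL : ∀ r : ℝ, 0 < r → 0 ≤ ∑ j, c j * Real.exp (-(r * t j)))
    (hm : ∀ k < ℓ, ∑ j, c j * t j ^ k = 0)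
    (f : ℕ → ℝ → ℝ) (hf : ∀ k t, 0 < t → HasDerivAt (f k) (-(f (k+1) t)) t)
    (hp : ∀ k t, ℓ ≤ k → 0 < t → 0 ≤ f k t) (d : ℝ) (hd : 0 < d) :
    0 ≤ ∑ j, c j * f 0 (2 * d + t j) := by
  obtain ⟨T, hT, hTt⟩ : ∃ T : ℝ, 0 < T ∧ ∀ j, t j ≤ T := by
    refine ⟨1 + ∑ j, t j, by have := Finset.sum_nonneg fun j (_ : j ∈ univ) => ht j
                             linarith, fun j => ?_⟩
    have := Finset.single_le_sum (fun j (_ : j ∈ univ) => ht j) (Finset.mem_univ j)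
    linarith
  suffices H : ∀ ε : ℝ, 0 < ε → -(ε * (T ^ ℓ * ∑ j, |c j|)) ≤ ∑ j, c j * f 0 (2 * d + t j) by
    by_contra hneg
    push Not at hneg
    set S := ∑ j, c j * f 0 (2 * d + t j)
    have hB : 0 ≤ T ^ ℓ * ∑ j, |c j| := by positivity
    set B := T ^ ℓ * ∑ j, |c j|
    have := H (-S / (B + 1) / 2) (by have : 0 < -S := by linarith
                                     positivity)
    have h2 : -S / (B + 1) / 2 * B ≤ -S / 2 := by
      rw [div_div, div_mul_eq_mul_div, div_le_div_iff₀ (by positivity) (by positivity)]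
      nlinarith
    linarith
  intro ε hε
  obtain ⟨N, q, r, hq, hr, happ⟩ := approx (fun k => f (k + ℓ))
    (fun k t h => by have := hf (k+ℓ) t h; rwa [show k + ℓ + 1 = k + 1 + ℓ by ring] at this)
    (fun k t h => hp _ t (by omega) h) d T ε hd hT hε
  simp only [zero_add] at happ
  let g : ℕ → ℝ → ℝ := fun k t => f k t - ∑ i ∈ range N, q i * r i ^ k / r i ^ ℓ * Real.exp (-(r i * t))
  have hg : ∀ k t, 0 < t → HasDerivAt (g k) (-(g (k+1) t)) t := by
    intro k t h
    have h1 : HasDerivAt (fun t => ∑ i ∈ range N, q i * r i ^ k / r i ^ ℓ * Real.exp (-(r i * t)))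
        (∑ i ∈ range N, q i * r i ^ k / r i ^ ℓ * (Real.exp (-(r i * t)) * (-(r i * 1)))) t := by
      apply HasDerivAt.fun_sum
      intro i _
      exact ((((hasDerivAt_id t).const_mul (r i)).neg).exp).const_mul _
    refine ((hf k t h).sub h1).congr_deriv ?_
    simp only [g]
    have : ∑ i ∈ range N, q i * r i ^ (k+1) / r i ^ ℓ * Real.exp (-(r i * t)) =
      - ∑ i ∈ range N, q i * r i ^ k / r i ^ ℓ * (Real.exp (-(r i * t)) * (-(r i * 1))) := by
      rw [← Finset.sum_neg_distrib]
      refine Finset.sum_congr rfl fun i _ => ?_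
      ring
    rw [this]; ring
  have hgl : ∀ t, 2 * d ≤ t → t ≤ 2 * d + T → |g ℓ t| ≤ ε := by
    intro t h1 h2
    convert happ t h1 h2 using 5 with i hi
    have := (hr i).ne'
    field_simp
  have hbd : ∀ j, |g 0 (2 * d + t j) - tay g ℓ (2 * d) (2 * d + t j)| ≤ ε * T ^ ℓ := by
    intro j
    rcases ℓ with _ | p
    · simpa [tay] using hgl (2 * d + t j) (by linarith [ht j]) (by linarith [hTt j])
    · rcases (ht j).eq_or_lt with h0 | h0
      · rw [← h0, add_zero, tay_self]; simp; positivity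
      · obtain ⟨y, hy, e⟩ := tay_mvt g hg p (2 * d + t j) (2 * d) (2 * d + t j) (by linarith) (by linarith)
        rw [tay_self] at e
        rw [e, abs_mul, abs_neg, abs_div, abs_mul, abs_pow]
        have y1 := hy.1
        have y2 := hy.2
        have tT := hTt j
        have b1 := hgl y y1.le (by linarith)
        have b2 : |y - (2 * d + t j)| ≤ T := by rw [abs_le]; constructor <;> linarith
        have b3 : |2 * d + t j - 2 * d| ≤ T := by rw [abs_le]; constructor <;> linarith
        have b4 : (1:ℝ) ≤ |(p.factorial : ℝ)| := by
          rw [Nat.abs_cast]; exact_mod_cast Nat.succ_le_of_lt p.factorial_pos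
        calc _ ≤ ε * T ^ p / 1 * T := by gcongr
          _ = _ := by ring
  have hpoly : ∑ j, c j * tay g ℓ (2 * d) (2 * d + t j) = 0 := by
    simp only [tay, Finset.mul_sum]
    rw [Finset.sum_comm]
    refine Finset.sum_eq_zero fun k hk => ?_
    have := hm k (Finset.mem_range.mp hk)
    calc _ = ∑ j, (g k (2*d) * (-1)^k / (k.factorial : ℝ)) * (c j * t j ^ k) := by
          refine Finset.sum_congr rfl fun j _ => ?_
          rw [show 2 * d - (2 * d + t j) = (-1) * t j by ring, mul_pow]; ring
      _ = 0 := by rw [← Finset.mul_sum, this, mul_zero]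
  have hexp : 0 ≤ ∑ j, c j * ∑ i ∈ range N, q i * r i ^ 0 / r i ^ ℓ * Real.exp (-(r i * (2 * d + t j))) := by
    simp only [Finset.mul_sum]
    rw [Finset.sum_comm]
    refine Finset.sum_nonneg fun i _ => ?_
    have hri := hr i
    have hqi := hq i
    calc 0 ≤ (q i * r i ^ 0 / r i ^ ℓ * Real.exp (-(r i * (2 * d)))) * ∑ j, c j * Real.exp (-(r i * t j)) :=
          mul_nonneg (by positivity) (hL _ hri)
      _ = _ := by
          rw [Finset.mul_sum]
          refine Finset.sum_congr rfl fun j _ => ?_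
          rw [show -(r i * (2 * d + t j)) = -(r i * (2*d)) + -(r i * t j) by ring, Real.exp_add]
          ring
  have hsplit : ∑ j, c j * f 0 (2 * d + t j) =
      ∑ j, c j * (g 0 (2 * d + t j) - tay g ℓ (2 * d) (2 * d + t j)) +
      ∑ j, c j * ∑ i ∈ range N, q i * r i ^ 0 / r i ^ ℓ * Real.exp (-(r i * (2 * d + t j))) := by
    simp only [mul_sub, Finset.sum_sub_distrib]
    rw [hpoly, sub_zero, ← Finset.sum_add_distrib]
    refine Finset.sum_congr rfl fun j _ => ?_
    simp only [g]; ring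
  have hlow : |∑ j, c j * (g 0 (2 * d + t j) - tay g ℓ (2 * d) (2 * d + t j))| ≤
      ε * (T ^ ℓ * ∑ j, |c j|) := by
    refine (Finset.abs_sum_le_sum_abs _ _).trans ?_
    rw [Finset.mul_sum, Finset.mul_sum]
    refine Finset.sum_le_sum fun j _ => ?_
    rw [abs_mul]
    have := mul_le_mul_of_nonneg_left (hbd j) (abs_nonneg (c j))
    linarith
  rw [hsplit]
  linarith [(abs_le.mp hlow).1]

theorem memM_sum {ι : Type*} [Fintype ι] [DecidableEq ι] {k m : ℕ} {c : (ι → Fin m) → ℝ}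
    (hc : MemM k c) (F : Finset ι) (hF : F.card = Fintype.card ι - k + 1)
    (h : (ι → Fin m) → ℝ) (hh : ∀ α α', (∀ i, i ∉ F → α i = α' i) → h α = h α') :
    ∑ α, c α * h α = 0 := by
  rcases isEmpty_or_nonempty (ι → Fin m) with he | ⟨⟨α0⟩⟩
  · simp
  rw [← (Equiv.piEquivPiSubtypeProd (fun i => i ∈ F) (fun _ => Fin m)).symm.sum_comp,
    Fintype.sum_prod_type_right]
  refine Finset.sum_eq_zero fun b _ => ?_
  let β : ι → Fin m := fun i => if h : i ∈ F then α0 i else b ⟨i, h⟩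
  have h1 : ∀ σ : {i // i ∈ F} → Fin m,
      (Equiv.piEquivPiSubtypeProd (fun i => i ∈ F) (fun _ => Fin m)).symm (σ, b) =
      fun i => if h : i ∈ F then σ ⟨i, h⟩ else β i := by
    intro σ; funext i
    by_cases hi : i ∈ F <;> simp [β, hi]
  have h2 : ∀ σ : {i // i ∈ F} → Fin m,
      h (fun i => if h : i ∈ F then σ ⟨i, h⟩ else β i) = h β := by
    intro σ; apply hh; intro i hi; simp [hi]
  simp only [h1, h2]
  rw [← Finset.sum_mul]
  have := hc F hF β
  rw [this, zero_mul]

theorem moment_zero {n ℓ m : ℕ} (hℓ : ℓ ≤ n) {c : (Fin n → Fin m) → ℝ} (hc : MemM ℓ c)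
    (g : Fin n → Fin m → Fin m → ℝ) (k : ℕ) (hk : k < ℓ) :
    ∑ α : Fin n → Fin m, ∑ β : Fin n → Fin m, c α * c β * (∑ i, g i (α i) (β i)) ^ k = 0 := by
  rw [Finset.sum_comm]
  refine Finset.sum_eq_zero fun β _ => ?_
  have : ∀ α : Fin n → Fin m, c α * c β * (∑ i, g i (α i) (β i)) ^ k =
      ∑ p : Fin k → Fin n, c β * (c α * ∏ j, g (p j) (α (p j)) (β (p j))) := by
    intro α
    rw [Fintype.sum_pow, Finset.mul_sum]
    refine Finset.sum_congr rfl fun p _ => ?_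
    ring
  simp only [this]
  rw [Finset.sum_comm]
  refine Finset.sum_eq_zero fun p _ => ?_
  rw [← Finset.mul_sum]
  have hcard : n - ℓ + 1 ≤ ((univ.image p)ᶜ).card := by
    rw [Finset.card_compl, Fintype.card_fin]
    have : (univ.image p).card ≤ k := by
      simpa using Finset.card_image_le (s := univ) (f := p)
    omega
  obtain ⟨F, hF1, hF2⟩ := Finset.exists_subset_card_eq hcard
  rw [memM_sum hc F (by simpa using hF2), mul_zero]
  intro α α' h
  refine Finset.prod_congr rfl fun j _ => ?_
  rw [h (p j) fun hj => by simpa using hF1 hj]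

theorem psd_iff_sum {J : Type*} [Fintype J] (K : J → J → ℝ) (hs : ∀ a b, K a b = K b a) :
    (Matrix.of K).PosSemidef ↔ ∀ c : J → ℝ, 0 ≤ ∑ a, ∑ b, c a * c b * K a b := by
  rw [Matrix.posSemidef_iff_dotProduct_mulVec]
  have e : ∀ c : J → ℝ, star c ⬝ᵥ (Matrix.of K).mulVec c = ∑ a, ∑ b, c a * c b * K a b := by
    intro c
    simp only [dotProduct, Matrix.mulVec, Matrix.of_apply, Finset.mul_sum, star_trivial]
    refine Finset.sum_congr rfl fun a _ => Finset.sum_congr rfl fun b _ => ?_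
    ring
  constructor
  · intro h c; rw [← e]; exact h.2 c
  · intro h
    refine ⟨?_, fun c => by rw [e]; exact h c⟩
    ext a b; simp [hs a b]

theorem psd_prod_s16 {J I : Type*} [Fintype J] (s : Finset I) (K : I → J → J → ℝ)
    (h : ∀ i ∈ s, (Matrix.of (K i)).PosSemidef) :
    (Matrix.of fun a b => ∏ i ∈ s, K i a b).PosSemidef := by
  classical
  induction s using Finset.induction_on with
  | empty =>
    simp only [Finset.prod_empty]
    rw [psd_iff_sum _ (fun _ _ => rfl)]
    intro c
    have : ∑ a, ∑ b, c a * c b * 1 = (∑ a, c a) * (∑ a, c a) := by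
      rw [Finset.sum_mul_sum]; simp
    rw [this]; exact mul_self_nonneg _
  | insert i s hi ih =>
    have h1 := (h i (by simp)).hadamard (ih fun j hj => h j (by simp [hj]))
    have e : (Matrix.of fun a b => ∏ j ∈ insert i s, K j a b) =
        (Matrix.of (K i)).hadamard (Matrix.of fun a b => ∏ j ∈ s, K j a b) := by
      ext a b
      simp [Finset.prod_insert hi]
    rw [e]
    exact h1

theorem psd_exp_s16 {J : Type*} [Fintype J] (K : J → J → ℝ) (hs : ∀ a b, K a b = K b a)
    (h : (Matrix.of K).PosSemidef) : (Matrix.of fun a b => Real.exp (K a b)).PosSemidef := by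
  rw [psd_iff_sum _ (fun a b => by rw [hs])]
  intro c
  have hsum : HasSum (fun k : ℕ => ∑ a, ∑ b, c a * c b * (K a b ^ k / (k.factorial : ℝ)))
      (∑ a, ∑ b, c a * c b * Real.exp (K a b)) := by
    refine hasSum_sum fun a _ => hasSum_sum fun b _ => ?_
    apply HasSum.mul_left
    rw [Real.exp_eq_exp_ℝ]
    exact NormedSpace.expSeries_div_hasSum_exp (K a b)
  refine hsum.nonneg fun k => ?_
  have h1 := psd_prod_s16 (range k) (fun _ => K) (fun _ _ => h)
  simp only [Finset.prod_const, Finset.card_range] at h1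
  rw [psd_iff_sum _ (fun a b => by rw [hs])] at h1
  have h2 := h1 c
  have : ∑ a, ∑ b, c a * c b * (K a b ^ k / (k.factorial : ℝ)) =
      (∑ a, ∑ b, c a * c b * K a b ^ k) / (k.factorial : ℝ) := by
    simp only [Finset.sum_div]
    refine Finset.sum_congr rfl fun a _ => Finset.sum_congr rfl fun b _ => ?_
    ring
  rw [this]; positivity

theorem schoenberg_s16 {Z : Type*} {γ : Z → Z → ℝ} (hγ : IsCND γ) (r : ℝ) (hr : 0 < r)
    {m : ℕ} (z : Fin m → Z) :
    (Matrix.of fun a b => Real.exp (-(r * γ (z a) (z b)))).PosSemidef := by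
  obtain ⟨hs, hc⟩ := hγ
  rcases isEmpty_or_nonempty (Fin m) with he | ⟨⟨j0⟩⟩
  · rw [psd_iff_sum _ (fun a b => by rw [hs])]
    intro c; simp
  set z0 := z j0
  let K : Fin m → Fin m → ℝ := fun a b =>
    r * (γ (z a) z0 + γ (z b) z0 - γ (z a) (z b) - γ z0 z0)
  have hKs : ∀ a b, K a b = K b a := fun a b => by simp only [K]; rw [hs (z a) (z b)]; ring
  have hK : (Matrix.of K).PosSemidef := by
    rw [psd_iff_sum _ hKs]
    intro c
    have h := hc (m+1) (Fin.cons z0 z) (Fin.cons (-∑ i, c i) c) (by simp [Fin.sum_univ_succ])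
    simp only [Fin.sum_univ_succ, Fin.cons_zero, Fin.cons_succ] at h
    set S := ∑ i, c i with hS
    set P := ∑ i, c i * γ (z i) z0 with hP
    set Q := ∑ i, ∑ j, c i * c j * γ (z i) (z j) with hQ
    have e1 : ∑ i, -S * c i * γ z0 (z i) = -S * P := by
      rw [hP, Finset.mul_sum]
      refine Finset.sum_congr rfl fun a _ => ?_
      rw [hs z0]; ring
    have e2 : ∑ i, (c i * -S * γ (z i) z0 + ∑ j, c i * c j * γ (z i) (z j)) = -S * P + Q := by
      rw [Finset.sum_add_distrib, hP, Finset.mul_sum]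
      congr 1
      refine Finset.sum_congr rfl fun a _ => ?_
      ring
    rw [e1, e2] at h
    have e3 : ∑ a, ∑ b, c a * c b * K a b = r * (2 * S * P - Q - S * S * γ z0 z0) := by
      have f1 : ∑ a, ∑ b, (c a * γ (z a) z0) * c b = P * S := by rw [Finset.sum_mul_sum]
      have f2 : ∑ a, ∑ b, c a * (c b * γ (z b) z0) = S * P := by rw [Finset.sum_mul_sum]
      have f3 : ∑ a, ∑ b, c a * c b = S * S := by rw [Finset.sum_mul_sum]
      have : ∀ a b, c a * c b * K a b = r * ((c a * γ (z a) z0) * c b + c a * (c b * γ (z b) z0)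
          - c a * c b * γ (z a) (z b) - (c a * c b) * γ z0 z0) := fun a b => by
        simp only [K]; ring
      simp only [this, ← Finset.mul_sum, Finset.sum_sub_distrib, Finset.sum_add_distrib,
        ← Finset.sum_mul]
      simp only [← Finset.mul_sum, ← Finset.sum_mul] at f1 f2 f3
      rw [← hQ]
      simp only [← hS, ← hP]
      ring
    rw [e3]
    apply mul_nonneg hr.le
    linarith
  have hE := psd_exp_s16 K hKs hK
  rw [psd_iff_sum _ (fun a b => by rw [hKs])] at hE
  rw [psd_iff_sum _ (fun a b => by rw [hs])]
  intro c
  have h := hE (fun a => c a * Real.exp (-(r * γ (z a) z0)))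
  have : ∑ a, ∑ b, c a * c b * Real.exp (-(r * γ (z a) (z b))) =
      Real.exp (r * γ z0 z0) * ∑ a, ∑ b, (c a * Real.exp (-(r * γ (z a) z0))) *
        (c b * Real.exp (-(r * γ (z b) z0))) * Real.exp (K a b) := by
    simp only [Finset.mul_sum]
    refine Finset.sum_congr rfl fun a _ => Finset.sum_congr rfl fun b _ => ?_
    have : -(r * γ (z a) (z b)) = r * γ z0 z0 + (-(r * γ (z a) z0) + (-(r * γ (z b) z0) + K a b)) := by
      simp only [K]; ring
    rw [this, Real.exp_add, Real.exp_add, Real.exp_add]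
    ring
  rw [this]
  exact mul_nonneg (Real.exp_pos _).le h

theorem laplace_nonneg {n m : ℕ} {X : Fin n → Type*} (γ : ∀ i, X i → X i → ℝ)
    (hγ : ∀ i, IsCND (γ i)) (x : ∀ i, Fin m → X i) (c : (Fin n → Fin m) → ℝ) (r : ℝ) (hr : 0 < r) :
    0 ≤ ∑ α : Fin n → Fin m, ∑ β : Fin n → Fin m,
      c α * c β * Real.exp (-(r * ∑ i, γ i (x i (α i)) (x i (β i)))) := by
  have h := psd_prod_s16 (J := Fin n → Fin m) (univ : Finset (Fin n))
    (fun i α β => Real.exp (-(r * γ i (x i (α i)) (x i (β i)))))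
    (fun i _ => (schoenberg_s16 (hγ i) r hr (x i)).submatrix (fun α : Fin n → Fin m => α i))
  rw [psd_iff_sum _ (fun a b => Finset.prod_congr rfl fun i _ => by rw [(hγ i).1])] at h
  convert h c using 6
  rw [← Real.exp_sum, Finset.mul_sum, Finset.sum_neg_distrib]


theorem main_nonneg {n ℓ : ℕ} (hℓ : ℓ ≤ n) (X : Fin n → Type*)
    (γ : ∀ i, X i → X i → ℝ) (hγpos : ∀ i a b, 0 ≤ γ i a b)
    (hγ : ∀ i, IsCND (γ i))
    (ψ : ℝ → ℝ) (hψc : ContinuousOn ψ (Set.Ici (0 : ℝ)))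
    (hψs : ∀ N : ℕ, ContDiffOn ℝ N ψ (Set.Ioi (0 : ℝ)))
    (hψm : ∀ m : ℕ, ℓ ≤ m → ∀ t : ℝ, 0 < t → 0 ≤ (-1 : ℝ) ^ m * iteratedDeriv m ψ t)
    (m : ℕ) (x : ∀ i, Fin m → X i) (c : (Fin n → Fin m) → ℝ) (hc : MemM ℓ c) :
    0 ≤ dSum (fun x1 x2 : ∀ i, X i => ψ (∑ i, γ i (x1 i) (x2 i))) x c := by
  let C : (Fin n → Fin m) × (Fin n → Fin m) → ℝ := fun p => c p.1 * c p.2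
  let t : (Fin n → Fin m) × (Fin n → Fin m) → ℝ := fun p => ∑ i, γ i (x i (p.1 i)) (x i (p.2 i))
  have ht : ∀ p, 0 ≤ t p := fun p => Finset.sum_nonneg fun i _ => hγpos _ _ _
  have hd : ∀ d : ℝ, 0 < d → 0 ≤ ∑ p, C p * ψ (2 * d + t p) := by
    intro d hd
    have := one_dim ℓ C t ht
      (fun r hr => by
        rw [Fintype.sum_prod_type]
        exact laplace_nonneg γ hγ x c r hr)
      (fun k hk => by
        rw [Fintype.sum_prod_type]
        exact moment_zero hℓ hc (fun i a b => γ i (x i a) (x i b)) k hk)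
      (fun k t => (-1 : ℝ) ^ k * iteratedDeriv k ψ t)
      (fun k t h => by
        have hon := (hψs (k+1)).differentiableOn_iteratedDerivWithin (m := k)
          (by exact_mod_cast Nat.lt_succ_self k) (isOpen_Ioi.uniqueDiffOn)
        have hdiff : DifferentiableAt ℝ (iteratedDeriv k ψ) t :=
          (hon.congr fun y hy => (iteratedDerivWithin_of_isOpen isOpen_Ioi hy).symm).differentiableAt
            (Ioi_mem_nhds h)
        refine (hdiff.hasDerivAt.const_mul ((-1 : ℝ) ^ k)).congr_deriv ?_
        rw [iteratedDeriv_succ]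
        ring)
      (fun k t hk h => hψm k hk t h) d hd
    simpa using this
  have hlim : Filter.Tendsto (fun d : ℝ => ∑ p, C p * ψ (2 * d + t p)) (nhdsWithin 0 (Set.Ioi 0))
      (nhds (∑ p, C p * ψ (t p))) := by
    refine tendsto_finsetSum _ fun p _ => Filter.Tendsto.const_mul _ ?_
    have h1 : Filter.Tendsto ψ (nhdsWithin (t p) (Set.Ici 0)) (nhds (ψ (t p))) := hψc (t p) (ht p)
    refine h1.comp ?_
    rw [tendsto_nhdsWithin_iff]
    constructor
    · have : Continuous fun d : ℝ => 2 * d + t p := by fun_prop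
      have h2 := this.tendsto 0
      simp only [mul_zero, zero_add] at h2
      exact h2.mono_left nhdsWithin_le_nhds
    · filter_upwards [self_mem_nhdsWithin] with d hd
      have : (0:ℝ) < d := hd
      have := ht p
      simp only [Set.mem_Ici]; linarith
  have hfin : 0 ≤ ∑ p, C p * ψ (t p) :=
    ge_of_tendsto hlim (by filter_upwards [self_mem_nhdsWithin] with d h using hd d h)
  rw [Fintype.sum_prod_type] at hfin
  exact hfin

/-- `ψ` is a continuous completely monotone function of order `ℓ`:
continuous on `[0,∞)`, `C^∞` on `(0,∞)`, with `(-1)^m ψ^{(m)}(t) ≥ 0` for every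
`m ≥ ℓ` and `t > 0`. -/
theorem statement16 {n ℓ : ℕ} (hℓ : ℓ ≤ n) (X : Fin n → Type*)
    (γ : ∀ i, X i → X i → ℝ) (hγpos : ∀ i a b, 0 ≤ γ i a b)
    (hγ : ∀ i, IsCND (γ i))
    (ψ : ℝ → ℝ) (hψc : ContinuousOn ψ (Set.Ici (0 : ℝ)))
    (hψs : ∀ N : ℕ, ContDiffOn ℝ N ψ (Set.Ioi (0 : ℝ)))
    (hψm : ∀ m : ℕ, ℓ ≤ m → ∀ t : ℝ, 0 < t → 0 ≤ (-1 : ℝ) ^ m * iteratedDeriv m ψ t) :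
    IsPDI ℓ (fun x1 x2 : ∀ i, X i => (-1 : ℝ) ^ ℓ * ψ (∑ i, γ i (x1 i) (x2 i))) ∧
      ∀ (m : ℕ) (x : ∀ i, Fin m → X i), (∀ i, Function.Injective (x i)) →
        ∀ c : (Fin n → Fin m) → ℝ, MemM ℓ c →
          0 ≤ dSum (fun x1 x2 : ∀ i, X i => ψ (∑ i, γ i (x1 i) (x2 i))) x c := by
  have key := main_nonneg hℓ X γ hγpos hγ ψ hψc hψs hψm
  refine ⟨⟨?_, ?_⟩, fun m x _ c hc => key m x c hc⟩
  · intro x1 x2 α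
    have : ∀ i, γ i (sel x1 x2 α i) (sel x1 x2 (fun i => !(α i)) i) = γ i (x1 i) (x2 i) := by
      intro i
      cases h : α i
      · simp [sel, h]
      · simp [sel, h, (hγ i).1 (x2 i)]
    simp only [this]
  · intro m x _ c hc
    have h := key m x c hc
    have e : (-1 : ℝ) ^ ℓ * dSum (fun x1 x2 : ∀ i, X i =>
        (-1 : ℝ) ^ ℓ * ψ (∑ i, γ i (x1 i) (x2 i))) x c =
        dSum (fun x1 x2 : ∀ i, X i => ψ (∑ i, γ i (x1 i) (x2 i))) x c := by
      have hs : (-1 : ℝ) ^ ℓ * (-1 : ℝ) ^ ℓ = 1 := by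
        rw [← mul_pow]; norm_num
      simp only [dSum, Finset.mul_sum]
      refine Finset.sum_congr rfl fun a _ => Finset.sum_congr rfl fun b _ => ?_
      linear_combination (c a * c b * ψ (∑ i, γ i (gridPt x a i) (gridPt x b i))) * hs
    rw [e]; exact h

end PDIPaper
end
end
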